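/- Let λ ∈ (1/2, 1) be an algebraic number with Mahler measure M_λ. Suppose that λ is not a root of any nonzero polynomial with coefficients in {−1, 0, 1}, and that (log M_λ − log 2)·(log M_λ)² < (1/27)·(log M_λ − log λ⁻¹)³·λ⁴. Then the Bernoulli convolution μ_λ is absolutely continuous with respect to Lebesgue measure on ℝ. -/

import Mathlib

open MeasureTheory Real

/-- The Bernoulli convolution with parameter `λ`: the law of `∑ₙ Xₙ λⁿ` with `Xₙ` i.i.d.
uniform on `{±1}`, realized by extracting the (i.i.d. fair) binary digits of a
uniform point of `[0,1)`. -/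
noncomputable def bernoulliConv (lam : ℝ) : Measure ℝ :=
  Measure.map
    (fun x => ∑' n : ℕ, (if ⌊x * 2 ^ (n + 1)⌋ % 2 = 1 then (1 : ℝ) else -1) * lam ^ n)
    (volume.restrict (Set.Ico (0 : ℝ) 1))

/-- The Mahler measure of an algebraic number with minimal polynomial `P` over `ℤ`:
`|leading coefficient| · ∏ max (|root|, 1)` over the complex roots of `P`. -/
noncomputable def mahlerMeasure (P : Polynomial ℤ) : ℝ :=
  |(P.leadingCoeff : ℝ)| * ((P.aroots ℂ).map fun z => max ‖z‖ 1).prod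



noncomputable def gk (y x : ℝ) : ℝ := (√(2 * π * y))⁻¹ * Real.exp (-x ^ 2 / (2 * y))

lemma gk_eq {y : ℝ} (hy : 0 < y) (x : ℝ) :
    gk y x = ProbabilityTheory.gaussianPDFReal 0 y.toNNReal x := by
  simp [gk, ProbabilityTheory.gaussianPDFReal, hy.le]

lemma gk_pos {y : ℝ} (hy : 0 < y) (x : ℝ) : 0 < gk y x := by
  unfold gk; positivity

lemma gk_cont (y : ℝ) : Continuous (gk y) := by
  unfold gk; fun_prop

lemma gk_le {y : ℝ} (hy : 0 < y) (x : ℝ) : gk y x ≤ (√(2 * π * y))⁻¹ := by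
  unfold gk
  have : Real.exp (-x ^ 2 / (2 * y)) ≤ 1 := by
    apply Real.exp_le_one_iff.2
    apply div_nonpos_of_nonpos_of_nonneg <;> nlinarith [sq_nonneg x]
  have h2 : 0 ≤ (√(2 * π * y))⁻¹ := by positivity
  nlinarith

lemma gk_integral {y : ℝ} (hy : 0 < y) : ∫ x, gk y x = 1 := by
  simp_rw [gk_eq hy]
  apply ProbabilityTheory.integral_gaussianPDFReal_eq_one
  simpa using hy

lemma gk_integrable_pow {y : ℝ} (hy : 0 < y) (n : ℕ) : Integrable (fun x => x ^ n * gk y x) := by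
  have h := integrable_rpow_mul_exp_neg_mul_sq (b := 1 / (2 * y)) (by positivity) (s := n)
    (by have : (0:ℝ) ≤ n := Nat.cast_nonneg n
        linarith)
  refine (h.const_mul (√(2 * π * y))⁻¹).congr (Filter.Eventually.of_forall fun x => ?_)
  simp only [gk, Real.rpow_natCast]
  have : -(1 / (2 * y)) * x ^ 2 = -x ^ 2 / (2 * y) := by ring
  rw [this]; ring

lemma gk_integrable {y : ℝ} (hy : 0 < y) : Integrable (gk y) := by
  simpa using gk_integrable_pow hy 0

lemma gk_hasDeriv {y : ℝ} (hy : 0 < y) (x : ℝ) : HasDerivAt (gk y) (-(x / y) * gk y x) x := by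
  unfold gk
  have h1 : HasDerivAt (fun x : ℝ => -x ^ 2 / (2 * y)) (-(x / y)) x := by
    have := ((hasDerivAt_pow 2 x).neg).div_const (2 * y)
    refine this.congr_deriv ?_
    push_cast; ring
  have := (h1.exp).const_mul (√(2 * π * y))⁻¹
  refine this.congr_deriv ?_
  ring

lemma gk_even (y x : ℝ) : gk y (-x) = gk y x := by simp [gk]

lemma gk_mean {y : ℝ} : ∫ x, x * gk y x = 0 := by
  have h := integral_neg_eq_self (fun x => x * gk y x) volume
  have h2 : ∫ x, -x * gk y (-x) = - ∫ x, x * gk y x := by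
    rw [← integral_neg]; congr 1; ext x; rw [gk_even]; ring
  rw [h2] at h; linarith

lemma gk_var {y : ℝ} (hy : 0 < y) : ∫ x, x ^ 2 * gk y x = y := by
  have h := integral_mul_deriv_eq_deriv_mul_of_integrable (u := fun x => x) (v := gk y)
    (u' := fun _ => 1) (v' := fun x => -(x / y) * gk y x)
    (fun x _ => hasDerivAt_id x) (fun x _ => gk_hasDeriv hy x)
    (((gk_integrable_pow hy 2).const_mul (-(1 / y))).congr
      (Filter.Eventually.of_forall fun x => by simp only [Pi.mul_apply]; ring))
    ((gk_integrable hy).congr (Filter.Eventually.of_forall fun x => by simp))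
    ((gk_integrable_pow hy 1).congr (Filter.Eventually.of_forall fun x => by simp))
  simp only [one_mul, gk_integral hy] at h
  have h2 : ∫ x, x * (-(x / y) * gk y x) = -(1 / y) * ∫ x, x ^ 2 * gk y x := by
    rw [← integral_const_mul]; congr 1; ext x; ring
  rw [h2] at h
  field_simp at h
  linarith

open Complex in
lemma gk_ft {y : ℝ} (hy : 0 < y) (ξ : ℝ) :
    ∫ x : ℝ, (gk y x : ℂ) * cexp (I * ξ * x) = cexp (-(y * ξ ^ 2 / 2)) := by
  have h := ProbabilityTheory.charFun_gaussianReal (μ := 0) (v := y.toNNReal) ξ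
  rw [charFun_apply_real, ProbabilityTheory.integral_gaussianReal_eq_integral_smul] at h
  · convert h using 2
    · ext x
      rw [gk_eq hy, Complex.real_smul]
      congr 2; ring
    · simp [hy.le]
  · simpa using hy

open Complex in
lemma cexp_norm_one (ξ x : ℝ) : ‖cexp (I * ξ * x)‖ = 1 := by
  have : I * ξ * x = ((ξ * x : ℝ) : ℂ) * I := by push_cast; ring
  rw [this, Complex.norm_exp_ofReal_mul_I]

open Complex in
lemma integrable_mul_cexp {f : ℝ → ℝ} (hf : Integrable f) (ξ : ℝ) :
    Integrable (fun x : ℝ => (f x : ℂ) * cexp (I * ξ * x)) := by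
  refine Integrable.mul_bdd (c := 1) hf.ofReal (by fun_prop) ?_
  exact Filter.Eventually.of_forall fun x => (cexp_norm_one ξ x).le

open Complex in
lemma gk_ft' {y : ℝ} (hy : 0 < y) (ξ : ℝ) :
    ∫ x : ℝ, ((x / y * gk y x : ℝ) : ℂ) * cexp (I * ξ * x) = I * ξ * cexp (-(y * ξ ^ 2 / 2)) := by
  have hd : ∀ x : ℝ, HasDerivAt (fun x : ℝ => cexp (I * ξ * x)) (I * ξ * cexp (I * ξ * x)) x := by
    intro x
    have := (((hasDerivAt_id (x : ℂ)).const_mul (I * ξ)).cexp).comp_ofReal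
    simpa [mul_comm] using this
  have h := integral_mul_deriv_eq_deriv_mul_of_integrable (u := fun x : ℝ => (cexp (I * ξ * x)))
    (v := fun x => (gk y x : ℂ))
    (u' := fun x => I * ξ * cexp (I * ξ * x)) (v' := fun x => ((-(x / y) * gk y x : ℝ) : ℂ))
    (fun x _ => hd x) (fun x _ => (gk_hasDeriv hy x).ofReal_comp)
    (by
      have := integrable_mul_cexp ((gk_integrable_pow hy 1).const_mul (-(1 / y))) ξ
      refine this.congr (Filter.Eventually.of_forall fun x => ?_)
      simp only [Pi.mul_apply]; push_cast; ring)
    (by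
      refine ((integrable_mul_cexp (gk_integrable hy) ξ).const_mul (I * ξ)).congr
        (Filter.Eventually.of_forall fun x => ?_)
      simp only [Pi.mul_apply]; ring)
    (by
      refine ((integrable_mul_cexp (gk_integrable hy) ξ)).congr
        (Filter.Eventually.of_forall fun x => ?_)
      simp only [Pi.mul_apply]; ring)
  have e1 : ∫ x : ℝ, cexp (I * ξ * x) * ((-(x / y) * gk y x : ℝ) : ℂ)
      = - ∫ x : ℝ, ((x / y * gk y x : ℝ) : ℂ) * cexp (I * ξ * x) := by
    rw [← integral_neg]; congr 1; ext x; push_cast; ring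
  have e2 : ∫ x : ℝ, I * ξ * cexp (I * ξ * x) * (gk y x : ℂ) = I * ξ * cexp (-(y * ξ ^ 2 / 2)) := by
    rw [← gk_ft hy, ← integral_const_mul]; congr 1; ext x; ring
  rw [e1, e2] at h
  exact neg_injective h

/-- completing the square -/
lemma gk_mul {y h : ℝ} (hy : 0 < y) (hh : 0 < h) (x s : ℝ) :
    gk y (x - s) * gk h s = gk (y + h) x * gk (y * h / (y + h)) (s - h * x / (y + h)) := by
  unfold gk
  rw [mul_mul_mul_comm, mul_mul_mul_comm (√(2 * π * (y + h)))⁻¹, ← mul_inv, ← mul_inv,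
    ← Real.sqrt_mul (by positivity),
    ← Real.sqrt_mul (by positivity), ← Real.exp_add, ← Real.exp_add]
  have e1 : 2 * π * y * (2 * π * h) = 2 * π * (y + h) * (2 * π * (y * h / (y + h))) := by
    field_simp
  have e2 : -(x - s) ^ 2 / (2 * y) + -s ^ 2 / (2 * h) = -x ^ 2 / (2 * (y + h)) +
      -(s - h * x / (y + h)) ^ 2 / (2 * (y * h / (y + h))) := by
    have : y + h ≠ 0 := by positivity
    field_simp
    ring
  rw [e1, e2]


lemma conv_int {f g : ℝ → ℝ} (hf : Integrable f) (hg : Integrable g) :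
    Integrable (fun x => ∫ s, f s * g (x - s)) ∧
    ∫ x, (∫ s, f s * g (x - s)) = (∫ x, f x) * ∫ x, g x := by
  refine ⟨hf.integrable_convolution (ContinuousLinearMap.mul ℝ ℝ) hg, ?_⟩
  exact integral_convolution (ContinuousLinearMap.mul ℝ ℝ) hf hg

lemma pinsker_aux {t : ℝ} (ht : 0 < t) : 3 * (t - 1) ^ 2 / (2 * (t + 2)) ≤ t * log t - t + 1 := by
  -- first derivative
  have hψ : ∀ t : ℝ, 0 < t → HasDerivAt (fun t => log t - 3 / 2 + 27 / 2 / (t + 2) ^ 2)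
      (1 / t - 27 / (t + 2) ^ 3) t := by
    intro t ht
    have h2 : HasDerivAt (fun t : ℝ => (t + 2) ^ 2) (2 * (t + 2)) t := by
      have := ((hasDerivAt_id t).add_const 2).pow 2
      exact this.congr_deriv (by simp)
    have h3 := (((Real.hasDerivAt_log ht.ne').sub_const (3/2)).add
      ((hasDerivAt_const t (27 / 2 : ℝ)).div h2 (by positivity)))
    refine h3.congr_deriv ?_
    field_simp
    ring
  have hψm : MonotoneOn (fun t : ℝ => log t - 3 / 2 + 27 / 2 / (t + 2) ^ 2) (Set.Ioi 0) := by
    apply monotoneOn_of_deriv_nonneg (convex_Ioi 0)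
    · exact fun x hx => (hψ x hx).continuousAt.continuousWithinAt
    · exact fun x hx => (hψ x (by simpa using hx)).differentiableAt.differentiableWithinAt
    · intro x hx
      have hx : 0 < x := by simpa using hx
      rw [(hψ x hx).deriv, sub_nonneg, div_le_div_iff₀ (by positivity) hx]
      nlinarith [mul_nonneg (sq_nonneg (x - 1)) (by linarith : 0 ≤ x + 8)]
  have hφ : ∀ t : ℝ, 0 < t → HasDerivAt
      (fun t => t * log t - t + 1 - (3 / 2) * ((t + 2) - 6 + 9 / (t + 2)))
      (log t - 3 / 2 + 27 / 2 / (t + 2) ^ 2) t := by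
    intro t ht
    have h1 : HasDerivAt (fun t : ℝ => 9 / (t + 2)) (-9 / (t + 2) ^ 2) t := by
      have := (hasDerivAt_const t (9 : ℝ)).div ((hasDerivAt_id t).add_const 2)
        (by simp; positivity)
      refine this.congr_deriv ?_
      simp
    have h2 : HasDerivAt (fun t : ℝ => t * log t) (log t + 1) t := Real.hasDerivAt_mul_log ht.ne'
    have h3 := ((h2.sub (hasDerivAt_id t)).add_const 1).sub
      (((((hasDerivAt_id t).add_const 2).sub_const 6).add h1).const_mul (3/2))
    refine h3.congr_deriv ?_
    field_simp
    ring
  have hval : 3 * (t - 1) ^ 2 / (2 * (t + 2)) = (3 / 2) * ((t + 2) - 6 + 9 / (t + 2)) := by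
    field_simp; ring
  rw [hval, ← sub_nonneg]
  have h1 : (1 : ℝ) * log 1 - 1 + 1 - (3 / 2) * ((1 + 2) - 6 + 9 / (1 + 2)) = 0 := by norm_num
  rw [← h1]
  rcases le_total 1 t with h | h
  · have : MonotoneOn (fun t : ℝ => t * log t - t + 1 - (3 / 2) * ((t + 2) - 6 + 9 / (t + 2)))
        (Set.Ici 1) := by
      apply monotoneOn_of_deriv_nonneg (convex_Ici 1)
      · exact fun x hx => (hφ x (lt_of_lt_of_le one_pos hx)).continuousAt.continuousWithinAt
      · intro x hx
        have hx : 1 < x := by simpa using hx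
        exact (hφ x (by linarith)).differentiableAt.differentiableWithinAt
      · intro x hx
        have hx : 1 < x := by simpa using hx
        rw [(hφ x (by linarith)).deriv]
        have := hψm (a := 1) (b := x) (by simp) (by simp; linarith) hx.le
        norm_num at this
        linarith
    exact this (by simp) h h
  · have : AntitoneOn (fun t : ℝ => t * log t - t + 1 - (3 / 2) * ((t + 2) - 6 + 9 / (t + 2)))
        (Set.Ioc 0 1) := by
      apply antitoneOn_of_deriv_nonpos (convex_Ioc 0 1)
      · exact fun x hx => (hφ x hx.1).continuousAt.continuousWithinAt
      · intro x hx
        have hx : 0 < x ∧ x < 1 := by simpa using hx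
        exact (hφ x hx.1).differentiableAt.differentiableWithinAt
      · intro x hx
        have hx : 0 < x ∧ x < 1 := by simpa using hx
        rw [(hφ x hx.1).deriv]
        have := hψm (a := x) (b := 1) (by simp; linarith) (by simp) hx.2.le
        norm_num at this
        linarith
    exact this ⟨ht, h⟩ (by simp) h

lemma pinsker_pt {a b : ℝ} (ha : 0 < a) (hb : 0 < b) :
    (a - b) ^ 2 ≤ 2 / 3 * (a + 2 * b) * (a * log a - a * log b - a + b) := by
  have h := pinsker_aux (div_pos ha hb)
  rw [div_le_iff₀ (by positivity), log_div ha.ne' hb.ne'] at h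
  have h2 := mul_le_mul_of_nonneg_left h (sq_nonneg b)
  have e1 : b ^ 2 * (3 * (a / b - 1) ^ 2) = 3 * (a - b) ^ 2 := by field_simp
  have e2 : b ^ 2 * ((a / b * (log a - log b) - a / b + 1) * (2 * (a / b + 2)))
      = 2 * (a + 2 * b) * (a * log a - a * log b - a + b) := by field_simp
  rw [e1, e2] at h2
  linarith

lemma kl_pt_nonneg {a b : ℝ} (ha : 0 < a) (hb : 0 < b) : 0 ≤ a * log a - a * log b - a + b := by
  have h := pinsker_pt ha hb
  by_contra hc
  push Not at hc
  have : 2 / 3 * (a + 2 * b) * (a * log a - a * log b - a + b) < 0 :=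
    mul_neg_of_pos_of_neg (by positivity) hc
  nlinarith [sq_nonneg (a - b)]

lemma pinsker_tau {a b s τ : ℝ} (ha : 0 < a) (hb : 0 < b) (hτ : 0 < τ) :
    |s| * |a - b| ≤ τ / 3 * s ^ 2 * (a + 2 * b) +
      1 / (2 * τ) * (a * log a - a * log b - a + b) := by
  have h := pinsker_pt ha hb
  have h0 := kl_pt_nonneg ha hb
  set φ := a * log a - a * log b - a + b
  have hA : 0 ≤ τ / 3 * s ^ 2 * (a + 2 * b) := by positivity
  have hB : 0 ≤ 1 / (2 * τ) * φ := by positivity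
  apply abs_le_of_sq_le_sq' _ (by positivity) |>.2
  have e : (|s| * |a - b|) ^ 2 = s ^ 2 * (a - b) ^ 2 := by rw [mul_pow, sq_abs, sq_abs]
  have e2 : τ / 3 * s ^ 2 * (a + 2 * b) * (1 / (2 * τ) * φ) = s ^ 2 * (2 / 3 * (a + 2 * b) * φ) / 4 := by
    field_simp; ring
  rw [e]
  have := mul_le_mul_of_nonneg_left h (sq_nonneg s)
  nlinarith [sq_nonneg (τ / 3 * s ^ 2 * (a + 2 * b) - 1 / (2 * τ) * φ)]


section mix
variable {ι : Type} [Fintype ι] [Nonempty ι]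

noncomputable def mix (x : ι → ℝ) (y z : ℝ) : ℝ := (Fintype.card ι : ℝ)⁻¹ * ∑ i, gk y (z - x i)

noncomputable def mixd (x : ι → ℝ) (y z : ℝ) : ℝ :=
  (Fintype.card ι : ℝ)⁻¹ * ∑ i, (z - x i) / y * gk y (z - x i)

noncomputable def Ent (x : ι → ℝ) (y : ℝ) : ℝ := - ∫ z, mix x y z * log (mix x y z)

lemma card_pos' : 0 < (Fintype.card ι : ℝ) := by exact_mod_cast Fintype.card_pos

lemma mix_integral_fun (x : ι → ℝ) {y : ℝ} {f : ℝ → ℝ} (hf : ∀ c, Integrable (fun z => f z * gk y (z - c))) :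
    Integrable (fun z => f z * mix x y z) ∧
    ∫ z, f z * mix x y z = (Fintype.card ι : ℝ)⁻¹ * ∑ i, ∫ z, f z * gk y (z - x i) := by
  have e : (fun z => f z * mix x y z) =
      fun z => (Fintype.card ι : ℝ)⁻¹ * ∑ i, f z * gk y (z - x i) := by
    ext z; unfold mix; rw [Finset.mul_sum, Finset.mul_sum, Finset.mul_sum]
    exact Finset.sum_congr rfl fun i _ => by ring
  constructor
  · rw [e]; exact (integrable_finsetSum _ fun i _ => hf _).const_mul _
  · rw [e, integral_const_mul, integral_finsetSum _ fun i _ => hf _]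

lemma mix_pos (x : ι → ℝ) {y : ℝ} (hy : 0 < y) (z : ℝ) : 0 < mix x y z := by
  unfold mix
  have := card_pos' (ι := ι)
  have : 0 < ∑ i, gk y (z - x i) := Finset.sum_pos (fun i _ => gk_pos hy _) Finset.univ_nonempty
  positivity

lemma mix_cont (x : ι → ℝ) (y : ℝ) : Continuous (mix x y) := by
  unfold mix
  have := gk_cont y
  fun_prop

lemma mix_le (x : ι → ℝ) {y : ℝ} (hy : 0 < y) (z : ℝ) : mix x y z ≤ (√(2 * π * y))⁻¹ := by
  unfold mix
  rw [inv_mul_le_iff₀ card_pos']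
  calc _ ≤ ∑ _i : ι, (√(2 * π * y))⁻¹ := Finset.sum_le_sum fun i _ => gk_le hy _
    _ = _ := by simp

lemma gk_sub_integrable {y : ℝ} (hy : 0 < y) (c : ℝ) : Integrable (fun z => gk y (z - c)) :=
  (gk_integrable hy).comp_sub_right c

lemma gk_sub_integrable_sq {y : ℝ} (hy : 0 < y) (c : ℝ) :
    Integrable (fun z => z ^ 2 * gk y (z - c)) ∧ ∫ z, z ^ 2 * gk y (z - c) = c ^ 2 + y := by
  have h2 := (gk_integrable_pow hy 2).comp_sub_right c
  have h1 := (gk_integrable_pow hy 1).comp_sub_right c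
  have h0 := gk_sub_integrable hy c
  have e : (fun z => z ^ 2 * gk y (z - c)) = fun z => (z - c) ^ 2 * gk y (z - c) +
      (2 * c * ((z - c) ^ 1 * gk y (z - c)) + c ^ 2 * gk y (z - c)) := by ext z; ring
  have i3 : Integrable (fun z => 2 * c * ((z - c) ^ 1 * gk y (z - c)) + c ^ 2 * gk y (z - c)) := (h1.const_mul (2 * c)).add (h0.const_mul (c ^ 2))
  constructor
  · rw [e]; exact h2.add i3
  · rw [e, integral_add h2 i3, integral_add (h1.const_mul _) (h0.const_mul _), integral_const_mul,
      integral_const_mul, integral_sub_right_eq_self (fun z => z ^ 2 * gk y z) c,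
      integral_sub_right_eq_self (fun z => z ^ 1 * gk y z) c,
      integral_sub_right_eq_self (fun z => gk y z) c, gk_var hy, gk_integral hy]
    simp only [pow_one, gk_mean]; ring

lemma mix_integral (x : ι → ℝ) {y : ℝ} (hy : 0 < y) :
    Integrable (mix x y) ∧ ∫ z, mix x y z = 1 := by
  have := mix_integral_fun x (y := y) (f := fun _ => 1) (by simpa using gk_sub_integrable hy)
  simp only [one_mul] at this
  refine ⟨this.1, this.2.trans ?_⟩
  rw [Finset.sum_congr rfl fun i _ => (integral_sub_right_eq_self (fun z => gk y z) (x i)).trans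
    (gk_integral hy)]
  have := card_pos' (ι := ι)
  simp [this.ne']

lemma mix_sq (x : ι → ℝ) {y : ℝ} (hy : 0 < y) {B : ℝ} (hB : ∀ i, |x i| ≤ B) :
    Integrable (fun z => z ^ 2 * mix x y z) ∧ ∫ z, z ^ 2 * mix x y z ≤ B ^ 2 + y := by
  have := mix_integral_fun x (y := y) (f := fun z => z ^ 2) (fun c => (gk_sub_integrable_sq hy c).1)
  refine ⟨this.1, this.2.le.trans ?_⟩
  rw [inv_mul_le_iff₀ card_pos']
  calc _ ≤ ∑ _i : ι, (B ^ 2 + y) := Finset.sum_le_sum fun i _ => by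
        rw [(gk_sub_integrable_sq hy _).2]
        have : x i ^ 2 ≤ B ^ 2 := by rw [← sq_abs]; exact pow_le_pow_left₀ (abs_nonneg _) (hB i) 2
        linarith
    _ = _ := by simp; ring

lemma mix_log_integrable (x : ι → ℝ) {y : ℝ} (hy : 0 < y) :
    Integrable (fun z => mix x y z * log (mix x y z)) := by
  obtain ⟨i0⟩ := ‹Nonempty ι›
  obtain ⟨B, hB⟩ : ∃ B, ∀ i, |x i| ≤ B := by
    obtain ⟨B, hB⟩ := (Set.finite_range fun i => |x i|).bddAbove
    exact ⟨B, fun i => hB ⟨i, rfl⟩⟩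
  have : Nonempty ι := ⟨i0⟩
  have hc := card_pos' (ι := ι)
  set C1 := |log (√(2 * π * y))⁻¹|
  set C2 := |log ((Fintype.card ι : ℝ)⁻¹ * (√(2 * π * y))⁻¹)|
  have hs : 0 < (√(2 * π * y))⁻¹ := by positivity
  have hlog : ∀ z, |log (mix x y z)| ≤ (C1 + C2 + x i0 ^ 2 / y) + 1 / y * z ^ 2 := by
    intro z
    have hp := mix_pos x hy z
    have up : log (mix x y z) ≤ C1 := (log_le_log hp (mix_le x hy z)).trans (le_abs_self _)
    have lo : -C2 - (z - x i0) ^ 2 / (2 * y) ≤ log (mix x y z) := by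
      have h1 : (Fintype.card ι : ℝ)⁻¹ * gk y (z - x i0) ≤ mix x y z := by
        unfold mix
        refine mul_le_mul_of_nonneg_left ?_ (by positivity)
        exact Finset.single_le_sum (f := fun i => gk y (z - x i)) (fun i _ => (gk_pos hy _).le)
          (Finset.mem_univ i0)
      have h2 := log_le_log (mul_pos (inv_pos.2 hc) (gk_pos hy _)) h1
      unfold gk at h2
      rw [← mul_assoc, log_mul (by positivity) (exp_pos _).ne', log_exp] at h2
      have := neg_abs_le (log ((Fintype.card ι : ℝ)⁻¹ * (√(2 * π * y))⁻¹))
      have e : -(z - x i0) ^ 2 / (2 * y) = -((z - x i0) ^ 2 / (2 * y)) := by ring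
      rw [e] at h2
      linarith
    have h3 : (z - x i0) ^ 2 / (2 * y) ≤ x i0 ^ 2 / y + 1 / y * z ^ 2 := by
      have : x i0 ^ 2 / y + 1 / y * z ^ 2 = (2 * x i0 ^ 2 + 2 * z ^ 2) / (2 * y) := by
        field_simp
      rw [this]
      gcongr
      nlinarith [sq_nonneg (z + x i0)]
    have h4 : 0 ≤ (z - x i0) ^ 2 / (2 * y) := by positivity
    have hC1 : 0 ≤ C1 := abs_nonneg _
    have hC2 : 0 ≤ C2 := abs_nonneg _
    rw [abs_le]
    constructor <;> linarith
  have hI := ((mix_integral x hy).1.const_mul (C1 + C2 + x i0 ^ 2 / y)).add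
    ((mix_sq x hy hB).1.const_mul (1 / y))
  refine hI.mono' ?_ (Filter.Eventually.of_forall fun z => ?_)
  · exact ((mix_cont x y).measurable.mul (mix_cont x y).measurable.log).aestronglyMeasurable
  · have hp := mix_pos x hy z
    rw [norm_mul, Real.norm_eq_abs, Real.norm_eq_abs, abs_of_pos hp]
    have := mul_le_mul_of_nonneg_left (hlog z) hp.le
    simp only [Pi.add_apply]
    linarith

lemma gk_conv {y h : ℝ} (hy : 0 < y) (hh : 0 < h) (z : ℝ) :
    (Integrable fun s => gk y (z - s) * gk h s) ∧ (Integrable fun s => s * (gk y (z - s) * gk h s)) ∧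
    ∫ s, gk y (z - s) * gk h s = gk (y + h) z ∧
    ∫ s, s * (gk y (z - s) * gk h s) = h * (z / (y + h) * gk (y + h) z) := by
  have hw : 0 < y * h / (y + h) := by positivity
  set w := y * h / (y + h) with hwd
  set c := h * z / (y + h) with hc
  have e0 : (fun s => gk y (z - s) * gk h s) = fun s => gk (y + h) z * gk w (s - c) := by
    ext s; exact gk_mul hy hh z s
  have h1 := (gk_integrable_pow hw 1).comp_sub_right c
  have h0 := gk_sub_integrable hw c
  have e1 : (fun s => s * (gk y (z - s) * gk h s)) = fun s =>
      gk (y + h) z * ((s - c) ^ 1 * gk w (s - c)) + gk (y + h) z * c * gk w (s - c) := by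
    ext s; rw [gk_mul hy hh z s]; ring
  refine ⟨?_, ?_, ?_, ?_⟩
  · rw [e0]; exact h0.const_mul _
  · rw [e1]; exact (h1.const_mul _).add (h0.const_mul _)
  · rw [e0, integral_const_mul, integral_sub_right_eq_self (fun z => gk w z) c, gk_integral hw,
      mul_one]
  · rw [e1, integral_add (h1.const_mul _) (h0.const_mul _), integral_const_mul, integral_const_mul,
      integral_sub_right_eq_self (fun z => gk w z) c, gk_integral hw,
      integral_sub_right_eq_self (fun z => z ^ 1 * gk w z) c]
    simp only [pow_one, gk_mean, hc]; ring

lemma mix_conv (x : ι → ℝ) {y h : ℝ} (hy : 0 < y) (hh : 0 < h) (z : ℝ) :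
    ∫ s, mix x y (z - s) * gk h s = mix x (y + h) z ∧
    ∫ s, s * (mix x y (z - s) * gk h s) = h * mixd x (y + h) z := by
  constructor
  · have e : (fun s => mix x y (z - s) * gk h s) = fun s => (Fintype.card ι : ℝ)⁻¹ *
        ∑ i, gk y ((z - x i) - s) * gk h s := by
      ext s; unfold mix; rw [mul_assoc, Finset.sum_mul]
      congr 1; exact Finset.sum_congr rfl fun i _ => by rw [sub_right_comm]
    rw [e, integral_const_mul, integral_finsetSum _ fun i _ => (gk_conv hy hh _).1]
    unfold mix
    congr 1; exact Finset.sum_congr rfl fun i _ => (gk_conv hy hh _).2.2.1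
  · have e : (fun s => s * (mix x y (z - s) * gk h s)) = fun s => (Fintype.card ι : ℝ)⁻¹ *
        ∑ i, s * (gk y ((z - x i) - s) * gk h s) := by
      ext s; unfold mix; rw [mul_assoc, Finset.sum_mul, mul_left_comm, Finset.mul_sum]
      congr 1; exact Finset.sum_congr rfl fun i _ => by rw [sub_right_comm]
    rw [e, integral_const_mul, integral_finsetSum _ fun i _ => (gk_conv hy hh _).2.1]
    unfold mixd
    rw [Finset.sum_congr rfl fun i _ => (gk_conv hy hh _).2.2.2, ← Finset.mul_sum]; ring

lemma mixd_integrable (x : ι → ℝ) {y : ℝ} (hy : 0 < y) : Integrable (mixd x y) := by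
  unfold mixd
  refine (integrable_finsetSum _ fun i _ => ?_).const_mul _
  have := ((gk_integrable_pow hy 1).const_mul (1 / y)).comp_sub_right (x i)
  refine this.congr (Filter.Eventually.of_forall fun z => ?_)
  simp only; ring
end mix


section ent
variable {ι : Type} [Fintype ι] [Nonempty ι]

lemma bdd_mul_int {p g : ℝ → ℝ} (hp : Continuous p) {C : ℝ} (hC : ∀ z, |p z| ≤ C)
    (hg : Integrable g) (z : ℝ) : Integrable (fun s => g s * p (z - s)) := by
  refine Integrable.mul_bdd (c := C) hg (by fun_prop) ?_
  exact Filter.Eventually.of_forall fun s => hC _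

lemma mixlog_bdd (x : ι → ℝ) {y : ℝ} (hy : 0 < y) :
    ∃ C, ∀ z, |mix x y z * log (mix x y z)| ≤ C := by
  obtain ⟨C, hC⟩ := (isCompact_Icc (a := (0 : ℝ)) (b := (√(2 * π * y))⁻¹)).exists_bound_of_continuousOn
    (f := fun t : ℝ => t * log t) Real.continuous_mul_log.continuousOn
  exact ⟨C, fun z => hC _ ⟨(mix_pos x hy z).le, mix_le x hy z⟩⟩

lemma ent_tau (x : ι → ℝ) {y h τ : ℝ} (hy : 0 < y) (hh : 0 < h) (hτ : 0 < τ) :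
    h * ∫ z, |mixd x (y + h) z| ≤ τ * h + 1 / (2 * τ) * (Ent x (y + h) - Ent x y) := by
  have hyh : 0 < y + h := by positivity
  set p := mix x y with hp
  set q := mix x (y + h) with hq
  have pc : Continuous p := mix_cont x y
  have pb : ∀ z, |p z| ≤ (√(2 * π * y))⁻¹ := fun z => by
    rw [abs_of_pos (mix_pos x hy z)]; exact mix_le x hy z
  obtain ⟨C, lb⟩ := mixlog_bdd x hy
  have lc : Continuous fun z => p z * log (p z) := Real.continuous_mul_log.comp pc
  have g0 := gk_integrable hh
  have g1 : Integrable (fun s => s * gk h s) := by simpa using gk_integrable_pow hh 1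
  have g2 := gk_integrable_pow hh 2
  have pI := (mix_integral x hy).1
  have lI := mix_log_integrable x hy
  obtain ⟨c1I, c1⟩ := conv_int g2 pI
  obtain ⟨c2I, c2⟩ := conv_int g0 lI
  have key : ∀ z, h * |mixd x (y + h) z| ≤
      τ / 3 * ((∫ s, s ^ 2 * gk h s * p (z - s)) + 2 * h * q z) +
      1 / (2 * τ) * ((∫ s, gk h s * (p (z - s) * log (p (z - s)))) - q z * log (q z)) := by
    intro z
    have i0 := bdd_mul_int pc pb g0 z
    have i1 := bdd_mul_int pc pb g1 z
    have i2 := bdd_mul_int pc pb g2 z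
    have il := bdd_mul_int lc lb g0 z
    have m0 : ∫ s, gk h s * p (z - s) = q z := by
      rw [hq, ← (mix_conv x hy hh z).1]; congr 1; ext s; ring
    have m1 : ∫ s, s * gk h s * p (z - s) = h * mixd x (y + h) z := by
      rw [← (mix_conv x hy hh z).2]; congr 1; ext s; ring
    have e1 : h * mixd x (y + h) z = ∫ s, (s * gk h s * p (z - s) - q z * (s * gk h s)) := by
      rw [integral_sub i1 (g1.const_mul _), m1, integral_const_mul, gk_mean]; ring
    have e2 : h * |mixd x (y + h) z| = |h * mixd x (y + h) z| := by
      rw [abs_mul, abs_of_pos hh]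
    rw [e2, e1]
    refine (abs_integral_le_integral_abs).trans ?_
    have j1 : Integrable (fun s => τ / 3 * (s ^ 2 * gk h s * p (z - s))) := i2.const_mul _
    have j2 : Integrable (fun s => τ / 3 * 2 * q z * (s ^ 2 * gk h s)) := g2.const_mul _
    have j3 : Integrable (fun s => 1 / (2 * τ) * (gk h s * (p (z - s) * log (p (z - s))))) :=
      il.const_mul _
    have j4 : Integrable (fun s => 1 / (2 * τ) * (log (q z) + 1) * (gk h s * p (z - s))) :=
      i0.const_mul _
    have j5 : Integrable (fun s => 1 / (2 * τ) * q z * gk h s) := g0.const_mul _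
    have J12 : Integrable (fun s => τ / 3 * (s ^ 2 * gk h s * p (z - s)) +
      τ / 3 * 2 * q z * (s ^ 2 * gk h s)) := j1.add j2
    have J34 : Integrable (fun s => 1 / (2 * τ) * (gk h s * (p (z - s) * log (p (z - s)))) -
      1 / (2 * τ) * (log (q z) + 1) * (gk h s * p (z - s))) := j3.sub j4
    have J345 : Integrable (fun s => 1 / (2 * τ) * (gk h s * (p (z - s) * log (p (z - s)))) -
      1 / (2 * τ) * (log (q z) + 1) * (gk h s * p (z - s)) + 1 / (2 * τ) * q z * gk h s) :=
      J34.add j5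
    have := integral_mono (i1.sub (g1.const_mul (q z))).abs (J12.add J345) (fun s => by
      have := mul_le_mul_of_nonneg_right
        (pinsker_tau (s := s) (mix_pos x hy (z - s)) (mix_pos x hyh z) hτ) (gk_pos hh s).le
      have e : |s * gk h s * p (z - s) - q z * (s * gk h s)| =
          |s| * |p (z - s) - q z| * gk h s := by
        rw [show s * gk h s * p (z - s) - q z * (s * gk h s) = s * (p (z - s) - q z) * gk h s by ring,
          abs_mul, abs_mul, abs_of_pos (gk_pos hh s)]
      simp only [Pi.sub_apply, Pi.add_apply]
      rw [e]
      refine this.trans (le_of_eq ?_)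
      simp only [hp, hq]
      ring)
    refine this.trans (le_of_eq ?_)
    have := integral_add J12 J345
    simp only [Pi.add_apply]
    rw [integral_add J12 J345, integral_add j1 j2, integral_add J34 j5, integral_sub j3 j4]
    simp only [integral_const_mul]
    rw [m0, gk_var hh, gk_integral hh]; ring
  have qI := (mix_integral x hyh).1
  have qL := mix_log_integrable x hyh
  have A1 : Integrable (fun z => (∫ s, s ^ 2 * gk h s * p (z - s)) + 2 * h * q z) :=
    c1I.add (qI.const_mul _)
  have A2 : Integrable (fun z => (∫ s, gk h s * (p (z - s) * log (p (z - s)))) - q z * log (q z)) :=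
    c2I.sub qL
  have := integral_mono ((mixd_integrable x hyh).abs.const_mul h)
    ((A1.const_mul (τ / 3)).add (A2.const_mul (1 / (2 * τ)))) key
  rw [integral_const_mul] at this
  refine this.trans (le_of_eq ?_)
  simp only [Pi.add_apply]
  rw [integral_add (A1.const_mul (τ / 3)) (A2.const_mul (1 / (2 * τ))), integral_const_mul,
    integral_const_mul, integral_add c1I (qI.const_mul _), integral_sub c2I qL, c1, c2,
    integral_const_mul, gk_var hh, gk_integral hh, (mix_integral x hy).2, (mix_integral x hyh).2]
  unfold Ent
  ring

lemma ent_incr (x : ι → ℝ) {y h : ℝ} (hy : 0 < y) (hh : 0 < h) :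
    h * (∫ z, |mixd x (y + h) z|) ^ 2 ≤ 2 * (Ent x (y + h) - Ent x y) := by
  set A := ∫ z, |mixd x (y + h) z|
  have hA : 0 ≤ A := integral_nonneg fun z => abs_nonneg _
  set D := Ent x (y + h) - Ent x y
  have key : ∀ τ : ℝ, 0 < τ → h * A ≤ τ * h + 1 / (2 * τ) * D := fun τ hτ => ent_tau x hy hh hτ
  rcases hA.eq_or_lt with h0 | h0
  · rw [← h0]
    simp only [ne_eq, OfNat.ofNat_ne_zero, not_false_eq_true, zero_pow, mul_zero]
    by_contra hD
    push Not at hD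
    have hD' : D < 0 := by linarith
    have h2 : 0 < -D / h := by apply div_pos <;> linarith
    have h1 := key (√(-D / h) / 2) (by positivity)
    rw [← h0] at h1
    set r := √(-D / h)
    have hr : 0 < r := by positivity
    have e : h * r ^ 2 = -D := by
      simp only [r]; rw [Real.sq_sqrt h2.le]; field_simp
    have e2 : 1 / (2 * (r / 2)) * D = - (h * r) := by
      have : D = -(h * r ^ 2) := by linarith
      rw [this]; field_simp
    rw [e2] at h1
    have : 0 < h * r := by positivity
    linarith
  · have h1 := key (A / 2) (by positivity)
    have h2 := mul_le_mul_of_nonneg_left h1 h0.le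
    have e : A * (A / 2 * h + 1 / (2 * (A / 2)) * D) = A ^ 2 * h / 2 + D := by field_simp
    rw [e] at h2
    nlinarith

lemma ent_mono (x : ι → ℝ) {y y' : ℝ} (hy : 0 < y) (h : y ≤ y') : Ent x y ≤ Ent x y' := by
  rcases h.eq_or_lt with h | h
  · rw [h]
  · have := ent_incr x hy (sub_pos.2 h)
    rw [add_sub_cancel] at this
    have h2 : 0 ≤ (y' - y) * (∫ z, |mixd x y' z|) ^ 2 :=
      mul_nonneg (sub_pos.2 h).le (sq_nonneg _)
    linarith

lemma ent_upper (x : ι → ℝ) {y B : ℝ} (hy : 0 < y) (hB : ∀ i, |x i| ≤ B) :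
    Ent x y ≤ log (√(2 * π)) + (B ^ 2 + y) / 2 := by
  have qI := mix_integral x hy
  have qL := mix_log_integrable x hy
  have q2 := mix_sq x hy hB
  have rI := gk_integrable one_pos
  have hpt : ∀ z, -(mix x y z * log (mix x y z)) ≤
      (log (√(2 * π)) - 1) * mix x y z + 1 / 2 * (z ^ 2 * mix x y z) + gk 1 z := by
    intro z
    have := kl_pt_nonneg (mix_pos x hy z) (gk_pos one_pos z)
    have e : log (gk 1 z) = - log (√(2 * π)) - z ^ 2 / 2 := by
      unfold gk
      rw [log_mul (by positivity) (exp_pos _).ne', log_exp, log_inv]; ring_nf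
    rw [e] at this
    nlinarith
  have J1 : Integrable (fun z => (log (√(2 * π)) - 1) * mix x y z) := qI.1.const_mul _
  have J2 : Integrable (fun z => 1 / 2 * (z ^ 2 * mix x y z)) := q2.1.const_mul _
  have J12 : Integrable (fun z => (log (√(2 * π)) - 1) * mix x y z + 1 / 2 * (z ^ 2 * mix x y z)) :=
    J1.add J2
  have := integral_mono qL.neg (J12.add rI) hpt
  simp only [Pi.add_apply, Pi.neg_apply] at this
  rw [integral_add J12 rI, integral_add J1 J2, integral_neg, integral_const_mul,
    integral_const_mul, qI.2, gk_integral one_pos] at this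
  unfold Ent
  linarith [q2.2]

lemma ent_lower (x : ι → ℝ) {y S : ℝ} (hy : 0 < y) (hS : ∀ z, mix x y z ≤ S) :
    - log S ≤ Ent x y := by
  have qI := mix_integral x hy
  have qL := mix_log_integrable x hy
  have := integral_mono qL (qI.1.const_mul (log S)) (fun z => by
    have := mul_le_mul_of_nonneg_left (log_le_log (mix_pos x hy z) (hS z)) (mix_pos x hy z).le
    simp only; linarith)
  rw [integral_const_mul, qI.2] at this
  unfold Ent; linarith

lemma mix_sep (x : ι → ℝ) {y sep : ℝ} (hy : 0 < y) (hsep : 0 ≤ sep)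
    (hx : ∀ i j, i ≠ j → sep ≤ |x i - x j|)
    (hc : (Fintype.card ι : ℝ) * exp (-(sep ^ 2 / (8 * y))) ≤ 1) (z : ℝ) :
    mix x y z ≤ 2 * (Fintype.card ι : ℝ)⁻¹ * (√(2 * π * y))⁻¹ := by
  classical
  unfold mix
  set g := (√(2 * π * y))⁻¹
  have hg : 0 < g := by positivity
  have hc0 := card_pos' (ι := ι)
  have far : ∀ i, sep / 2 ≤ |z - x i| → gk y (z - x i) ≤ g * exp (-(sep ^ 2 / (8 * y))) := by
    intro i hi
    unfold gk
    refine mul_le_mul_of_nonneg_left (exp_le_exp.2 ?_) hg.le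
    have : (sep / 2) ^ 2 ≤ (z - x i) ^ 2 := by
      rw [← sq_abs (z - x i)]; exact pow_le_pow_left₀ (by positivity) hi 2
    rw [neg_div, neg_le_neg_iff]
    calc sep ^ 2 / (8 * y) = (sep / 2) ^ 2 / (2 * y) := by ring
      _ ≤ _ := by gcongr
  have bound : ∑ i, gk y (z - x i) ≤ 2 * g := by
    by_cases hi : ∃ i0, |z - x i0| < sep / 2
    · obtain ⟨i0, hi0⟩ := hi
      have : ∀ i ∈ Finset.univ.erase i0, gk y (z - x i) ≤ g * exp (-(sep ^ 2 / (8 * y))) := by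
        intro i hi
        apply far
        by_contra hcon
        push Not at hcon
        have h1 := hx i i0 (Finset.ne_of_mem_erase hi)
        have h2 : |x i - x i0| ≤ |z - x i0| + |z - x i| := by
          have := abs_sub (z - x i0) (z - x i)
          rwa [show z - x i0 - (z - x i) = x i - x i0 by ring] at this
        linarith
      rw [← Finset.add_sum_erase _ _ (Finset.mem_univ i0)]
      have h3 := Finset.sum_le_card_nsmul _ _ _ this
      rw [nsmul_eq_mul] at h3
      have h4 : ((Finset.univ.erase i0).card : ℝ) ≤ Fintype.card ι := by
        exact_mod_cast Finset.card_le_univ _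
      have h5 := gk_le hy (z - x i0)
      have h6 : ((Finset.univ.erase i0).card : ℝ) * (g * exp (-(sep ^ 2 / (8 * y)))) ≤ g := by
        calc _ ≤ (Fintype.card ι : ℝ) * (g * exp (-(sep ^ 2 / (8 * y)))) := by gcongr
          _ = g * ((Fintype.card ι : ℝ) * exp (-(sep ^ 2 / (8 * y)))) := by ring
          _ ≤ g * 1 := by gcongr
          _ = g := mul_one _
      linarith
    · push Not at hi
      have h3 := Finset.sum_le_card_nsmul Finset.univ _ _ fun i _ => far i (hi i)
      rw [nsmul_eq_mul, Finset.card_univ] at h3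
      have h6 : (Fintype.card ι : ℝ) * (g * exp (-(sep ^ 2 / (8 * y)))) ≤ g := by
        calc _ = g * ((Fintype.card ι : ℝ) * exp (-(sep ^ 2 / (8 * y)))) := by ring
          _ ≤ g * 1 := by gcongr
          _ = g := mul_one _
      linarith
  calc _ ≤ (Fintype.card ι : ℝ)⁻¹ * (2 * g) := by gcongr
    _ = _ := by ring

lemma ent_sep (x : ι → ℝ) {y sep : ℝ} (hy : 0 < y) (hsep : 0 ≤ sep)
    (hx : ∀ i j, i ≠ j → sep ≤ |x i - x j|)
    (hc : (Fintype.card ι : ℝ) * exp (-(sep ^ 2 / (8 * y))) ≤ 1) :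
    log (Fintype.card ι) + log y / 2 - log 2 ≤ Ent x y := by
  have h := ent_lower x hy (mix_sep x hy hsep hx hc)
  refine le_trans ?_ h
  have hc0 := card_pos' (ι := ι)
  rw [log_mul (by positivity) (by positivity), log_mul (by norm_num) (by positivity), log_inv,
    log_inv, log_sqrt (by positivity), log_mul (by positivity) hy.ne']
  have : 0 ≤ log (2 * π) := log_nonneg (by nlinarith [pi_gt_three])
  linarith
end ent


section sep
open Polynomial

lemma natDegree_pos_of_root {lam : ℝ} {P : Polynomial ℤ} (hP : P ≠ 0)
    (hroot : aeval lam P = 0) : 0 < P.natDegree := by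
  rw [Nat.pos_iff_ne_zero]
  intro h
  rw [eq_C_of_natDegree_eq_zero h] at hroot hP
  simp only [aeval_C] at hroot
  apply hP
  have h2 : P.coeff 0 = 0 := by simpa using hroot
  rw [h2]; simp

lemma common_root {lam : ℝ} {P Q : Polynomial ℤ} (hP : P ≠ 0) (hirr : Irreducible P)
    (hroot : aeval lam P = 0) {α : ℂ} (h1 : aeval α P = 0) (h2 : aeval α Q = 0) :
    aeval lam Q = 0 := by
  have hd := natDegree_pos_of_root hP hroot
  have hprim : P.IsPrimitive := hirr.isPrimitive hd.ne'
  have hirr' : Irreducible (P.map (Int.castRingHom ℚ)) :=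
    (IsPrimitive.Int.irreducible_iff_irreducible_map_cast hprim).1 hirr
  have e1 : aeval α (P.map (algebraMap ℤ ℚ)) = 0 := by rw [aeval_map_algebraMap]; exact h1
  have e2 : aeval α (Q.map (algebraMap ℤ ℚ)) = 0 := by rw [aeval_map_algebraMap]; exact h2
  have hm := minpoly.eq_of_irreducible hirr' e1
  have hdvd := minpoly.dvd ℚ α e2
  rw [← hm] at hdvd
  have hdvd2 : P.map (algebraMap ℤ ℚ) ∣ Q.map (algebraMap ℤ ℚ) :=
    (Dvd.intro _ rfl).trans hdvd
  obtain ⟨R, hR⟩ := hdvd2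
  have := congrArg (aeval lam) hR
  rw [map_mul, aeval_map_algebraMap, aeval_map_algebraMap, hroot, zero_mul] at this
  exact this

lemma eval_bound {Q : Polynomial ℤ} {n : ℕ} (hn : Q.natDegree ≤ n)
    (hc : ∀ k, |Q.coeff k| ≤ 1) (z : ℂ) : ‖aeval z Q‖ ≤ (n + 1) * (max ‖z‖ 1) ^ n := by
  rw [aeval_eq_sum_range' (Nat.lt_succ_of_le hn)]
  refine (norm_sum_le _ _).trans ?_
  have : ∀ i ∈ Finset.range n.succ, ‖Q.coeff i • z ^ i‖ ≤ (max ‖z‖ 1) ^ n := by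
    intro i hi
    have h1 : |(Q.coeff i : ℝ)| ≤ 1 := by exact_mod_cast hc i
    rw [zsmul_eq_mul, norm_mul, norm_pow, Complex.norm_intCast]
    calc |(Q.coeff i : ℝ)| * ‖z‖ ^ i ≤ 1 * (max ‖z‖ 1) ^ i := by
          gcongr; exact le_max_left _ _
      _ ≤ _ := by
          rw [one_mul]
          exact pow_le_pow_right₀ (le_max_right _ _) (Nat.lt_succ_iff.1 (Finset.mem_range.1 hi))
  refine (Finset.sum_le_card_nsmul _ _ _ this).trans ?_
  simp

lemma prod_bound {Q : Polynomial ℤ} {n : ℕ} (hn : Q.natDegree ≤ n)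
    (hc : ∀ k, |Q.coeff k| ≤ 1) (T : Multiset ℂ) :
    ‖(T.map fun z => aeval z Q).prod‖ ≤
      (n + 1 : ℝ) ^ T.card * ((T.map fun z => max ‖z‖ 1).prod) ^ n := by
  induction T using Multiset.induction with
  | empty => simp
  | cons a T ih =>
    rw [Multiset.map_cons, Multiset.prod_cons, Multiset.map_cons, Multiset.prod_cons, norm_mul,
      Multiset.card_cons, pow_succ, mul_pow]
    calc _ ≤ ((n + 1) * (max ‖a‖ 1) ^ n) *
          ((n + 1 : ℝ) ^ T.card * ((T.map fun z => max ‖z‖ 1).prod) ^ n) := by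
          gcongr; exact eval_bound hn hc a
      _ = _ := by ring

lemma resultant_bound {lam : ℝ} {P Q : Polynomial ℤ} (hP : P ≠ 0) (hirr : Irreducible P)
    (hroot : aeval lam P = 0) {n : ℕ} (hn : Q.natDegree ≤ n)
    (hc : ∀ k, |Q.coeff k| ≤ 1) (hQ : aeval lam Q ≠ 0) :
    1 ≤ |aeval lam Q| * (mahlerMeasure P ^ n * (n + 1) ^ P.natDegree) := by
  classical
  set f := P.map (algebraMap ℤ ℂ) with hf
  set g := Q.map (algebraMap ℤ ℂ) with hg
  have inj : Function.Injective (algebraMap ℤ ℂ) := by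
    simpa using (Int.cast_injective (α := ℂ))
  have hdeg : f.natDegree = P.natDegree := natDegree_map_eq_of_injective inj P
  have hres := resultant_eq_prod_eval f g n (natDegree_map_le.trans hn) (IsAlgClosed.splits f)
  rw [resultant_map_map, hdeg] at hres
  have hlc : f.leadingCoeff = (P.leadingCoeff : ℂ) := by
    rw [leadingCoeff_map_of_injective inj]; simp
  have hev : ∀ α, g.eval α = aeval α Q := fun α => by rw [hg, eval_map_algebraMap]
  set S := f.roots with hS
  have hSr : S = P.aroots ℂ := rfl
  have hf0 : f ≠ 0 := (Polynomial.map_ne_zero_iff inj).2 hP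
  have hR0 : resultant P Q P.natDegree n ≠ 0 := by
    intro h0
    rw [h0, map_zero] at hres
    rcases mul_eq_zero.1 hres.symm with h | h
    · rw [hlc] at h
      have := eq_zero_of_pow_eq_zero h
      simp [hP] at this
    · obtain ⟨α, ha, h2⟩ := Multiset.mem_map.1 (Multiset.prod_eq_zero_iff.1 h)
      rw [hev] at h2
      have h1 : aeval α P = 0 := by
        have := (mem_roots hf0).1 ha
        rwa [IsRoot, hf, eval_map_algebraMap] at this
      exact hQ (common_root hP hirr hroot h1 h2)
  have h1 : (1 : ℝ) ≤ ‖(algebraMap ℤ ℂ) (resultant P Q P.natDegree n)‖ := by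
    simp only [algebraMap_int_eq, eq_intCast, Complex.norm_intCast]
    exact_mod_cast Int.one_le_abs hR0
  rw [hres, hlc, norm_mul, norm_pow, Complex.norm_intCast] at h1
  have hmem : (lam : ℂ) ∈ S := by
    rw [hS, mem_roots hf0, IsRoot, hf, eval_map_algebraMap]
    have := aeval_algebraMap_apply ℂ lam P
    rw [hroot, map_zero] at this
    simpa using this
  obtain ⟨T, hT⟩ := Multiset.exists_cons_of_mem hmem
  have hcard : T.card ≤ P.natDegree := by
    have : S.card ≤ f.natDegree := card_roots' f
    rw [hT, Multiset.card_cons, hdeg] at this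
    omega
  have hlamQ : ‖aeval (lam : ℂ) Q‖ = |aeval lam Q| := by
    have := aeval_algebraMap_apply ℂ lam Q
    simp only [Complex.coe_algebraMap] at this
    rw [this, Complex.norm_real, Real.norm_eq_abs]
  simp only [hev] at h1
  rw [hT, Multiset.map_cons, Multiset.prod_cons, norm_mul, hlamQ] at h1
  have hpb := prod_bound hn hc T
  unfold _root_.mahlerMeasure
  rw [← hSr, hT, Multiset.map_cons, Multiset.prod_cons]
  set A := |(P.leadingCoeff : ℝ)|
  set B := (T.map fun z => max ‖z‖ 1).prod
  have hB : 0 ≤ B := Multiset.prod_nonneg (by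
    intro a ha
    obtain ⟨b, _, rfl⟩ := Multiset.mem_map.1 ha
    positivity)
  have hA : 0 ≤ A := abs_nonneg _
  have hm : 1 ≤ max ‖(lam : ℂ)‖ 1 := le_max_right _ _
  refine h1.trans ?_
  calc A ^ n * (|aeval lam Q| * ‖(T.map fun z => aeval z Q).prod‖)
      ≤ A ^ n * (|aeval lam Q| * ((n + 1 : ℝ) ^ T.card * B ^ n)) := by gcongr
    _ = |aeval lam Q| * ((A * (1 * B)) ^ n * (n + 1) ^ T.card) := by ring
    _ ≤ _ := by gcongr; simp
end sep


noncomputable def sgn (b : Bool) : ℝ := if b then 1 else -1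

noncomputable def pts (lam : ℝ) (m : ℕ) (e : Fin m → Bool) : ℝ := ∑ n : Fin m, sgn (e n) * lam ^ (n : ℕ)

noncomputable def Ff (lam : ℝ) (m : ℕ) (y : ℝ) : ℝ := y * (∫ z, |mixd (pts lam m) y z|) ^ 2

lemma mahler_ge_one {P : Polynomial ℤ} (hP : P ≠ 0) : 1 ≤ mahlerMeasure P := by
  unfold mahlerMeasure
  have h1 : (1 : ℝ) ≤ |(P.leadingCoeff : ℝ)| := by
    exact_mod_cast Int.one_le_abs (Polynomial.leadingCoeff_ne_zero.2 hP)
  have h2 : 1 ≤ ((P.aroots ℂ).map fun z => max ‖z‖ 1).prod := by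
    generalize P.aroots ℂ = T
    induction T using Multiset.induction with
    | empty => simp
    | cons a T ih =>
      rw [Multiset.map_cons, Multiset.prod_cons]
      exact one_le_mul_of_one_le_of_one_le (le_max_right _ _) ih
  exact one_le_mul_of_one_le_of_one_le h1 h2

lemma pts_bound {lam : ℝ} (h0 : 0 < lam) (h1 : lam < 1) (m : ℕ) (e : Fin m → Bool) :
    |pts lam m e| ≤ (1 - lam)⁻¹ := by
  unfold pts
  refine (Finset.abs_sum_le_sum_abs _ _).trans ?_
  have : ∀ n : Fin m, |sgn (e n) * lam ^ (n : ℕ)| = lam ^ (n : ℕ) := by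
    intro n
    rw [abs_mul, abs_of_pos (pow_pos h0 _)]
    unfold sgn; split_ifs <;> simp
  rw [Finset.sum_congr rfl fun n _ => this n, Fin.sum_univ_eq_sum_range (fun n => lam ^ n) m,
    ← tsum_geometric_of_lt_one h0.le h1]
  exact (summable_geometric_of_lt_one h0.le h1).sum_le_tsum _ fun i _ => by positivity

section
variable {lam : ℝ} {P : Polynomial ℤ}

lemma pts_sep (hP : P ≠ 0) (hirr : Irreducible P) (hroot : Polynomial.aeval lam P = 0)
    (hpm : ∀ Q : Polynomial ℤ, Q ≠ 0 → (∀ n, Q.coeff n = -1 ∨ Q.coeff n = 0 ∨ Q.coeff n = 1) →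
      Polynomial.aeval lam Q ≠ 0) (m : ℕ) (e e' : Fin m → Bool) (hne : e ≠ e') :
    (mahlerMeasure P ^ m * (m + 1) ^ P.natDegree)⁻¹ ≤ |pts lam m e - pts lam m e'| := by
  classical
  set c : Fin m → ℤ := fun n => (if e n then 1 else 0) - (if e' n then 1 else 0) with hc
  have hc1 : ∀ n, c n = -1 ∨ c n = 0 ∨ c n = 1 := by
    intro n; simp only [hc]; split_ifs <;> simp
  set Q : Polynomial ℤ := ∑ n : Fin m, Polynomial.C (c n) * Polynomial.X ^ (n : ℕ) with hQ
  have hcoeff : ∀ k, Q.coeff k = if h : k < m then c ⟨k, h⟩ else 0 := by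
    intro k
    simp only [hQ, Polynomial.finsetSum_coeff, Polynomial.coeff_C_mul, Polynomial.coeff_X_pow]
    split_ifs with h
    · rw [Finset.sum_eq_single ⟨k, h⟩]
      · simp
      · intro b _ hb
        have : k ≠ b := fun hk => hb (Fin.ext hk.symm)
        simp [this]
      · simp
    · apply Finset.sum_eq_zero
      intro b _
      have : k ≠ b := fun hk => h (hk ▸ b.2)
      simp [this]
  have hcoeff1 : ∀ n, Q.coeff n = -1 ∨ Q.coeff n = 0 ∨ Q.coeff n = 1 := by
    intro n; rw [hcoeff]; split_ifs
    · exact hc1 _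
    · simp
  have hQ0 : Q ≠ 0 := by
    intro h
    obtain ⟨n, hn⟩ := Function.ne_iff.1 hne
    have := hcoeff n
    rw [h] at this
    simp only [Polynomial.coeff_zero, Fin.is_lt, dite_true, hc] at this
    revert hn this
    cases e n <;> cases e' n <;> simp
  have hdeg : Q.natDegree ≤ m := by
    rw [Polynomial.natDegree_le_iff_coeff_eq_zero]
    intro k hk
    rw [hcoeff, dif_neg (by omega)]
  have hb := resultant_bound hP hirr hroot hdeg
    (fun k => by rcases hcoeff1 k with h | h | h <;> rw [h] <;> simp) (hpm Q hQ0 hcoeff1)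
  have hdiff : pts lam m e - pts lam m e' = 2 * Polynomial.aeval lam Q := by
    unfold pts
    rw [hQ, map_sum, ← Finset.sum_sub_distrib, Finset.mul_sum]
    refine Finset.sum_congr rfl fun n _ => ?_
    simp only [map_mul, Polynomial.aeval_C, map_pow, Polynomial.aeval_X, hc, sgn]
    split_ifs <;> simp <;> ring
  have hM := mahler_ge_one hP
  rw [hdiff, abs_mul, abs_two]
  set D := mahlerMeasure P ^ m * (m + 1 : ℝ) ^ P.natDegree
  have hD : 0 < D := by positivity
  rw [inv_le_iff_one_le_mul₀ hD]
  have : 0 ≤ |(Polynomial.aeval lam) Q| * D := by positivity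
  linarith

/-- error term -/
noncomputable def rest (lam : ℝ) (P : Polynomial ℤ) (m : ℕ) : ℝ :=
  log (√(2 * π)) + ((1 - lam)⁻¹ ^ 2 + 1) / 2 + log 2 + P.natDegree * log (m + 1) + log (8 * m) / 2

lemma ent_block (h0 : 0 < lam) (h1 : lam < 1) (hP : P ≠ 0) (hirr : Irreducible P)
    (hroot : Polynomial.aeval lam P = 0)
    (hpm : ∀ Q : Polynomial ℤ, Q ≠ 0 → (∀ n, Q.coeff n = -1 ∨ Q.coeff n = 0 ∨ Q.coeff n = 1) →
      Polynomial.aeval lam Q ≠ 0) {m : ℕ} (hm : 1 ≤ m) {y y' : ℝ}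
    (hy : exp (-2 * m * log (mahlerMeasure P)) ≤ y) (hy' : 0 < y') (hy1 : y' ≤ 1) :
    Ent (pts lam m) y' - Ent (pts lam m) y ≤
      m * (log (mahlerMeasure P) - log 2) + rest lam P m := by
  have hM := mahler_ge_one hP
  have hM0 : 0 < mahlerMeasure P := by linarith
  have hm0 : (1 : ℝ) ≤ m := by exact_mod_cast hm
  set D := mahlerMeasure P ^ m * (m + 1 : ℝ) ^ P.natDegree with hD
  have hDpos : 0 < D := by positivity
  have up := (ent_mono (pts lam m) hy' hy1).trans (ent_upper (pts lam m) one_pos (pts_bound h0 h1 m))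
  set y0 : ℝ := D⁻¹ ^ 2 / (8 * m) with hy0
  have hy0p : 0 < y0 := by positivity
  have hcard : (Fintype.card (Fin m → Bool) : ℝ) = 2 ^ m := by simp
  have lo := ent_sep (pts lam m) hy0p (sep := D⁻¹) (by positivity)
    (fun i j hij => pts_sep hP hirr hroot hpm m i j hij) (by
      have e : D⁻¹ ^ 2 / (8 * y0) = m := by rw [hy0]; field_simp
      rw [e, hcard, exp_neg, mul_inv_le_iff₀ (exp_pos _), one_mul, ← exp_one_pow]
      exact pow_le_pow_left₀ (by norm_num) (by linarith [add_one_le_exp (1:ℝ)]) m)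
  have hle : y0 ≤ y := by
    refine le_trans ?_ hy
    have e : exp (-2 * m * log (mahlerMeasure P)) = (mahlerMeasure P ^ m)⁻¹ ^ 2 := by
      rw [show -2 * (m:ℝ) * log (mahlerMeasure P) = -(((2 * m : ℕ) : ℝ) * log (mahlerMeasure P)) by push_cast; ring,
        exp_neg, exp_nat_mul, exp_log hM0, inv_pow, ← pow_mul, mul_comm]
    rw [e, hy0]
    refine (div_le_self (by positivity) (by linarith)).trans ?_
    gcongr
    rw [hD]
    refine le_mul_of_one_le_right (by positivity) ?_
    exact one_le_pow₀ (by linarith)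
  have mono := ent_mono (pts lam m) hy0p hle
  rw [hcard, hy0, log_div (by positivity) (by positivity), log_pow, log_pow, log_inv, hD,
    log_mul (by positivity) (by positivity), log_pow, log_pow] at lo
  unfold rest
  push_cast at lo
  linarith

lemma rest_tendsto (lam : ℝ) (P : Polynomial ℤ) :
    Filter.Tendsto (fun m : ℕ => rest lam P m / m) Filter.atTop (nhds 0) := by
  have h1 : Filter.Tendsto (fun m : ℕ => log (m : ℝ) / m) Filter.atTop (nhds 0) := by
    have := (Real.isLittleO_log_id_atTop.tendsto_div_nhds_zero).comp (tendsto_natCast_atTop_atTop (R := ℝ))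
    exact this
  have h0 : ∀ c : ℝ, Filter.Tendsto (fun m : ℕ => c / (m:ℝ)) Filter.atTop (nhds 0) :=
    fun c => tendsto_const_div_atTop_nhds_zero_nat c
  have h2 : Filter.Tendsto (fun m : ℕ => log ((m : ℝ) + 1) / m) Filter.atTop (nhds 0) := by
    have hup : Filter.Tendsto (fun m : ℕ => log 2 / m + log (m : ℝ) / m) Filter.atTop (nhds 0) := by
      simpa using (h0 (log 2)).add h1
    refine tendsto_of_tendsto_of_tendsto_of_le_of_le' tendsto_const_nhds hup ?_ ?_
    · exact Filter.Eventually.of_forall fun m => div_nonneg (log_nonneg (by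
        have : (0:ℝ) ≤ m := Nat.cast_nonneg m
        linarith)) (Nat.cast_nonneg m)
    · filter_upwards [Filter.eventually_ge_atTop 1] with m hm
      have hm' : (1:ℝ) ≤ m := by exact_mod_cast hm
      rw [← add_div, ← log_mul (by norm_num) (by positivity)]
      gcongr
      linarith
  have := ((h0 (log (√(2 * π)) + ((1 - lam)⁻¹ ^ 2 + 1) / 2 + log 2 + log 8 / 2)).add
    (h2.const_mul (P.natDegree : ℝ))).add (h1.const_mul (1/2))
  simp only [mul_zero, add_zero] at this
  refine this.congr' ?_
  filter_upwards [Filter.eventually_ge_atTop 1] with m hm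
  have hm' : (1:ℝ) ≤ m := by exact_mod_cast hm
  unfold rest
  rw [log_mul (by norm_num) (by positivity)]
  ring

lemma log_mahler_ge (h0 : 0 < lam) (h1 : lam < 1) (hP : P ≠ 0) (hirr : Irreducible P)
    (hroot : Polynomial.aeval lam P = 0)
    (hpm : ∀ Q : Polynomial ℤ, Q ≠ 0 → (∀ n, Q.coeff n = -1 ∨ Q.coeff n = 0 ∨ Q.coeff n = 1) →
      Polynomial.aeval lam Q ≠ 0) : log 2 ≤ log (mahlerMeasure P) := by
  have key : ∀ m : ℕ, 1 ≤ m → 0 ≤ (log (mahlerMeasure P) - log 2) + rest lam P m / m := by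
    intro m hm
    have hM := log_nonneg (mahler_ge_one hP)
    have hm0 : (1 : ℝ) ≤ m := by exact_mod_cast hm
    have := ent_block h0 h1 hP hirr hroot hpm hm (y := 1) (y' := 1) (by
      rw [exp_le_one_iff]
      have : 0 ≤ (m : ℝ) * log (mahlerMeasure P) := by positivity
      linarith) one_pos le_rfl
    rw [sub_self] at this
    have h2 : 0 ≤ (m * (log (mahlerMeasure P) - log 2) + rest lam P m) / m := by positivity
    rwa [add_div, mul_div_cancel_left₀ _ (by positivity)] at h2
  have lim := (rest_tendsto lam P).const_add (log (mahlerMeasure P) - log 2)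
  have := ge_of_tendsto lim (by
    filter_upwards [Filter.eventually_ge_atTop 1] with m hm using key m hm)
  linarith

lemma block_exists (h0 : 0 < lam) (h1 : lam < 1) (hP : P ≠ 0) (hirr : Irreducible P)
    (hroot : Polynomial.aeval lam P = 0)
    (hpm : ∀ Q : Polynomial ℤ, Q ≠ 0 → (∀ n, Q.coeff n = -1 ∨ Q.coeff n = 0 ∨ Q.coeff n = 1) →
      Polynomial.aeval lam Q ≠ 0) {m K : ℕ} (hm : 1 ≤ m) (hK : 1 ≤ K) {y : ℝ}
    (hy : exp (-2 * m * log (mahlerMeasure P)) ≤ y) (hy1 : y * (lam⁻¹ ^ 2) ^ K ≤ 1) :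
    ∃ k < K, K * ((1 - lam ^ 2) * Ff lam m (y * (lam⁻¹ ^ 2) ^ (k + 1))) ≤
      2 * (m * (log (mahlerMeasure P) - log 2) + rest lam P m) := by
  have hy0 : 0 < y := (exp_pos _).trans_le hy
  by_contra hcon
  push Not at hcon
  have hl : lam ^ 2 < 1 := by nlinarith
  have step : ∀ k, (1 - lam ^ 2) * Ff lam m (y * (lam⁻¹ ^ 2) ^ (k + 1)) ≤
      2 * (Ent (pts lam m) (y * (lam⁻¹ ^ 2) ^ (k + 1)) - Ent (pts lam m) (y * (lam⁻¹ ^ 2) ^ k)) := by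
    intro k
    set u := y * (lam⁻¹ ^ 2) ^ (k + 1) with hu
    have hu0 : 0 < u := by positivity
    have e : y * (lam⁻¹ ^ 2) ^ k = u * lam ^ 2 := by
      have : lam⁻¹ ^ 2 * lam ^ 2 = 1 := by rw [← mul_pow, inv_mul_cancel₀ h0.ne', one_pow]
      rw [hu, pow_succ]; linear_combination (-(y * (lam⁻¹ ^ 2) ^ k)) * this
    have hpos : 0 < u * (1 - lam ^ 2) := by apply mul_pos hu0; linarith
    have := ent_incr (pts lam m) (y := u * lam ^ 2) (by positivity) hpos
    rw [show u * lam ^ 2 + u * (1 - lam ^ 2) = u by ring] at this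
    rw [e]; unfold Ff; linarith
  have hsum := Finset.sum_le_sum fun k (_ : k ∈ Finset.range K) => step k
  rw [← Finset.mul_sum (f := fun k => Ent (pts lam m) (y * (lam⁻¹ ^ 2) ^ (k + 1)) - Ent (pts lam m) (y * (lam⁻¹ ^ 2) ^ k)), Finset.sum_range_sub (fun k => Ent (pts lam m) (y * (lam⁻¹ ^ 2) ^ k))] at hsum
  simp only [pow_zero, mul_one] at hsum
  have he := ent_block h0 h1 hP hirr hroot hpm hm hy (y' := y * (lam⁻¹ ^ 2) ^ K) (by positivity) hy1
  set R := m * (log (mahlerMeasure P) - log 2) + rest lam P m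
  have hK0 : (0:ℝ) < K := by exact_mod_cast hK
  have hlow : ∑ k ∈ Finset.range K, (2 * R / K) <
      ∑ k ∈ Finset.range K, (1 - lam ^ 2) * Ff lam m (y * (lam⁻¹ ^ 2) ^ (k + 1)) := by
    apply Finset.sum_lt_sum_of_nonempty (Finset.nonempty_range_iff.2 (by omega))
    intro k hk
    rw [div_lt_iff₀ hK0, mul_comm]
    have := hcon k (Finset.mem_range.1 hk)
    linarith
  rw [Finset.sum_const, Finset.card_range, nsmul_eq_mul, mul_div_cancel₀ _ hK0.ne'] at hlow
  linarith
end


section mult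
open Complex (I)

/-- Fourier multiplier bound on trigonometric polynomials. -/
def Mult (a : ℝ → ℂ) (A : ℝ) : Prop :=
  ∀ (S : Finset ℤ) (f : ℤ → ℝ) (c : ℤ → ℂ) (B : ℝ),
    (∀ x : ℝ, ‖∑ n ∈ S, c n * Complex.exp (I * f n * x)‖ ≤ B) →
    ∀ x : ℝ, ‖∑ n ∈ S, c n * a (f n) * Complex.exp (I * f n * x)‖ ≤ A * B

lemma Mult.mul {a b : ℝ → ℂ} {A B : ℝ} (ha : Mult a A) (hb : Mult b B) :
    Mult (fun ξ => a ξ * b ξ) (A * B) := by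
  intro S f c D hD x
  have := hb S f (fun n => c n * a (f n)) (A * D) (ha S f c D hD) x
  simp only [mul_assoc] at this ⊢
  rwa [mul_left_comm A B D]

lemma Mult.one : Mult (fun _ => 1) 1 := by
  intro S f c D hD x; simpa using hD x

lemma Mult.prod {κ : Type} (T : Finset κ) {a : κ → ℝ → ℂ} {A : κ → ℝ}
    (h : ∀ i ∈ T, Mult (a i) (A i)) : Mult (fun ξ => ∏ i ∈ T, a i ξ) (∏ i ∈ T, A i) := by
  classical
  induction T using Finset.induction_on with
  | empty => simpa using Mult.one
  | insert i T hi ih =>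
    simp only [Finset.prod_insert hi]
    exact (h i (Finset.mem_insert_self _ _)).mul (ih fun k hk => h k (Finset.mem_insert_of_mem hk))

lemma Mult.const_mul {a : ℝ → ℂ} {A : ℝ} (ha : Mult a A) (k : ℂ) :
    Mult (fun ξ => k * a ξ) (‖k‖ * A) := by
  intro S f c D hD x
  have e : ∑ n ∈ S, c n * (k * a (f n)) * Complex.exp (I * f n * x) =
      k * ∑ n ∈ S, c n * a (f n) * Complex.exp (I * f n * x) := by
    rw [Finset.mul_sum]; exact Finset.sum_congr rfl fun n _ => by ring
  rw [e, norm_mul, mul_assoc]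
  exact mul_le_mul_of_nonneg_left (ha S f c D hD x) (norm_nonneg _)

lemma Mult.mono {a : ℝ → ℂ} {A A' : ℝ} (ha : Mult a A) (h : A ≤ A') : Mult a A' := by
  intro S f c D hD x
  have : 0 ≤ D := (norm_nonneg _).trans (hD 0)
  exact (ha S f c D hD x).trans (mul_le_mul_of_nonneg_right h this)

lemma Mult.scale {a : ℝ → ℂ} {A s : ℝ} (ha : Mult a A) (hs : s ≠ 0) :
    Mult (fun ξ => a (s * ξ)) A := by
  intro S f c D hD x
  have := ha S (fun n => s * f n) c D (fun x => by
    refine le_of_eq_of_le ?_ (hD (s * x))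
    congr 1; refine Finset.sum_congr rfl fun n _ => ?_
    push_cast; ring_nf) (x / s)
  refine le_of_eq_of_le ?_ this
  congr 1; refine Finset.sum_congr rfl fun n _ => ?_
  congr 2
  have : (s : ℂ) ≠ 0 := by exact_mod_cast hs
  push_cast; field_simp

lemma Mult.ft {ν : Measure ℝ} {h : ℝ → ℝ} (hh : Integrable h ν) :
    Mult (fun ξ => ∫ t, (h t : ℂ) * Complex.exp (I * ξ * t) ∂ν) (∫ t, |h t| ∂ν) := by
  intro S f c D hD x
  have hi : ∀ ξ : ℝ, Integrable (fun t : ℝ => (h t : ℂ) * Complex.exp (I * ξ * t)) ν := fun ξ =>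
    Integrable.mul_bdd (c := 1) hh.ofReal (by fun_prop)
      (Filter.Eventually.of_forall fun x => (cexp_norm_one ξ x).le)
  have e : ∑ n ∈ S, c n * (∫ t, (h t : ℂ) * Complex.exp (I * f n * t) ∂ν) *
      Complex.exp (I * f n * x) =
      ∫ t, (h t : ℂ) * ∑ n ∈ S, c n * Complex.exp (I * f n * ((x + t : ℝ) : ℂ)) ∂ν := by
    have : (fun t : ℝ => (h t : ℂ) * ∑ n ∈ S, c n * Complex.exp (I * f n * ((x + t : ℝ) : ℂ))) =
        fun t : ℝ => ∑ n ∈ S, (c n * Complex.exp (I * f n * x)) *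
          ((h t : ℂ) * Complex.exp (I * f n * t)) := by
      ext t
      rw [Finset.mul_sum]
      refine Finset.sum_congr rfl fun n _ => ?_
      push_cast
      rw [mul_add, Complex.exp_add]; ring
    rw [this, integral_finsetSum _ fun n _ => (hi _).const_mul _]
    refine Finset.sum_congr rfl fun n _ => ?_
    rw [integral_const_mul]; ring
  rw [e]
  refine (norm_integral_le_integral_norm _).trans ?_
  rw [← integral_mul_const]
  refine integral_mono_of_nonneg (Filter.Eventually.of_forall fun t => norm_nonneg _)
    (hh.abs.mul_const _) (Filter.Eventually.of_forall fun t => ?_)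
  simp only [norm_mul, Complex.norm_real, Real.norm_eq_abs]
  exact mul_le_mul_of_nonneg_left (hD _) (abs_nonneg _)

lemma Mult.char (ν : Measure ℝ) [IsProbabilityMeasure ν] :
    Mult (fun ξ => ∫ t : ℝ, Complex.exp (I * ξ * t) ∂ν) 1 := by
  have := Mult.ft (ν := ν) (h := fun _ => 1) (integrable_const _)
  simpa using this

lemma Mult.cos (r : ℝ) : Mult (fun ξ => Complex.cos (r * ξ)) 1 := by
  intro S f c D hD x
  have e : ∑ n ∈ S, c n * Complex.cos (r * f n) * Complex.exp (I * f n * x) =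
      (1 / 2) * (∑ n ∈ S, c n * Complex.exp (I * f n * ((x + r : ℝ) : ℂ)) +
        ∑ n ∈ S, c n * Complex.exp (I * f n * ((x - r : ℝ) : ℂ))) := by
    rw [← Finset.sum_add_distrib, Finset.mul_sum]
    refine Finset.sum_congr rfl fun n _ => ?_
    rw [Complex.cos]; push_cast
    rw [mul_add (I * (f n : ℂ)), mul_sub (I * (f n : ℂ)), Complex.exp_add, Complex.exp_sub,
      show -(r * (f n : ℂ)) * I = -(I * f n * r) by ring,
      show (r * (f n : ℂ)) * I = (I * f n * r) by ring, Complex.exp_neg]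
    ring
  rw [e, norm_mul, one_mul]
  have h2 := norm_add_le (∑ n ∈ S, c n * Complex.exp (I * f n * ((x + r : ℝ) : ℂ)))
    (∑ n ∈ S, c n * Complex.exp (I * f n * ((x - r : ℝ) : ℂ)))
  have : ‖(1 / 2 : ℂ)‖ = 1 / 2 := by norm_num
  rw [this]
  linarith [hD (x + r), hD (x - r)]

lemma mean_exp (lam : ℝ) (m : ℕ) (ξ : ℝ) :
    (Fintype.card (Fin m → Bool) : ℂ)⁻¹ * ∑ e : Fin m → Bool, Complex.exp (I * ξ * pts lam m e) =
      ∏ n ∈ Finset.range m, Complex.cos (((lam ^ n : ℝ) : ℂ) * ξ) := by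
  classical
  have h1 : ∀ e : Fin m → Bool, Complex.exp (I * ξ * pts lam m e) =
      ∏ n : Fin m, Complex.exp (I * ξ * (sgn (e n) * lam ^ (n : ℕ) : ℝ)) := by
    intro e
    rw [← Complex.exp_sum, pts, Complex.ofReal_sum, Finset.mul_sum]
  simp only [h1]
  have h2 := Finset.prod_univ_sum (fun _ : Fin m => (Finset.univ : Finset Bool))
    (fun n b => Complex.exp (I * ξ * (sgn b * lam ^ (n : ℕ) : ℝ)))
  rw [Fintype.piFinset_univ] at h2
  rw [← h2, ← Fin.prod_univ_eq_prod_range (fun n => Complex.cos (((lam ^ n : ℝ) : ℂ) * ξ)) m]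
  have hc : (Fintype.card (Fin m → Bool) : ℂ)⁻¹ = ∏ n : Fin m, (2 : ℂ)⁻¹ := by simp
  rw [hc, ← Finset.prod_mul_distrib]
  refine Finset.prod_congr rfl fun n _ => ?_
  rw [Fintype.sum_bool, Complex.cos]
  simp only [sgn, if_true, Bool.false_eq_true, if_false]
  push_cast
  rw [show I * ξ * ((1:ℂ) * lam ^ (n : ℕ)) = lam ^ (n : ℕ) * ξ * I by ring,
    show I * ξ * (-(1:ℂ) * lam ^ (n : ℕ)) = -(lam ^ (n : ℕ) * ξ) * I by ring]
  ring

lemma mixd_ft (lam : ℝ) (m : ℕ) {w : ℝ} (hw : 0 < w) (ξ : ℝ) :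
    ∫ z : ℝ, (mixd (pts lam m) w z : ℂ) * Complex.exp (I * ξ * z) =
    I * ξ * Complex.exp (-(w * ξ ^ 2 / 2)) *
      ∏ n ∈ Finset.range m, Complex.cos (((lam ^ n : ℝ) : ℂ) * ξ) := by
  rw [← mean_exp]
  have hG : Integrable (fun z : ℝ => ((z / w * gk w z : ℝ) : ℂ) * Complex.exp (I * ξ * z)) := by
    apply integrable_mul_cexp
    refine ((gk_integrable_pow hw 1).const_mul (1 / w)).congr
      (Filter.Eventually.of_forall fun z => ?_)
    simp only; ring
  set G : ℝ → ℂ := fun z : ℝ => ((z / w * gk w z : ℝ) : ℂ) * Complex.exp (I * ξ * z)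
  have e : (fun z : ℝ => (mixd (pts lam m) w z : ℂ) * Complex.exp (I * ξ * z)) =
      fun z => ∑ e : Fin m → Bool, ((Fintype.card (Fin m → Bool) : ℂ)⁻¹ *
        Complex.exp (I * ξ * pts lam m e)) * G (z - pts lam m e) := by
    ext z
    simp only [mixd, Complex.ofReal_mul, Complex.ofReal_sum, Complex.ofReal_inv,
      Complex.ofReal_natCast, G]
    rw [mul_assoc, Finset.sum_mul, Finset.mul_sum]
    refine Finset.sum_congr rfl fun i _ => ?_
    rw [Complex.ofReal_sub, mul_sub, Complex.exp_sub]
    have := Complex.exp_ne_zero (I * ξ * pts lam m i)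
    field_simp
  rw [e, integral_finsetSum _ fun i _ => (hG.comp_sub_right _).const_mul _]
  simp only [integral_const_mul]
  simp only [integral_sub_right_eq_self G]
  rw [gk_ft' hw ξ, ← Finset.sum_mul, ← Finset.mul_sum]
  ring

lemma Mult.block {lam : ℝ} (h0 : 0 < lam) (m a : ℕ) {v δ : ℝ} (hv : 0 < v)
    (hF : Ff lam m (v * (lam⁻¹ ^ 2) ^ a) ≤ δ) :
    Mult (fun ξ => ξ * Complex.exp (-(v * ξ ^ 2 / 2)) *
      ∏ n ∈ Finset.Ico a (a + m), Complex.cos (((lam ^ n : ℝ) : ℂ) * ξ)) √(δ / v) := by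
  set w := v * (lam⁻¹ ^ 2) ^ a with hw
  have hw0 : 0 < w := by positivity
  have h1 := Mult.ft (mixd_integrable (pts lam m) hw0)
  simp only [mixd_ft lam m hw0] at h1
  have h2 := (h1.scale (s := lam ^ a) (by positivity)).const_mul (-I * ((lam⁻¹ ^ a : ℝ) : ℂ))
  have hL : (lam : ℂ) ≠ 0 := by exact_mod_cast h0.ne'
  have e : (fun ξ : ℝ => -I * ((lam⁻¹ ^ a : ℝ) : ℂ) * (I * ((lam ^ a * ξ : ℝ) : ℂ) *
      Complex.exp (-(w * ((lam ^ a * ξ : ℝ) : ℂ) ^ 2 / 2)) *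
      ∏ n ∈ Finset.range m, Complex.cos (((lam ^ n : ℝ) : ℂ) * ((lam ^ a * ξ : ℝ) : ℂ)))) =
      (fun ξ : ℝ => ξ * Complex.exp (-(v * ξ ^ 2 / 2)) *
      ∏ n ∈ Finset.Ico a (a + m), Complex.cos (((lam ^ n : ℝ) : ℂ) * ξ)) := by
    ext ξ
    have e1 : ∏ n ∈ Finset.range m, Complex.cos (((lam ^ n : ℝ) : ℂ) * ((lam ^ a * ξ : ℝ) : ℂ)) =
        ∏ n ∈ Finset.Ico a (a + m), Complex.cos (((lam ^ n : ℝ) : ℂ) * ξ) := by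
      rw [Finset.prod_Ico_eq_prod_range, Nat.add_sub_cancel_left]
      refine Finset.prod_congr rfl fun n _ => ?_
      push_cast; rw [pow_add]; ring_nf
    have e2 : (w : ℂ) * ((lam ^ a * ξ : ℝ) : ℂ) ^ 2 = v * ξ ^ 2 := by
      rw [hw]; push_cast; rw [← pow_mul, inv_pow]; field_simp; ring
    have e3 : ((lam⁻¹ ^ a : ℝ) : ℂ) * ((lam ^ a * ξ : ℝ) : ℂ) = ξ := by
      push_cast; rw [inv_pow]; field_simp
    rw [e1, e2]
    linear_combination (-I * I * Complex.exp (-(v * ξ ^ 2 / 2)) *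
      ∏ n ∈ Finset.Ico a (a + m), Complex.cos (((lam ^ n : ℝ) : ℂ) * ξ)) * e3 -
      (ξ * Complex.exp (-(v * ξ ^ 2 / 2)) *
      ∏ n ∈ Finset.Ico a (a + m), Complex.cos (((lam ^ n : ℝ) : ℂ) * ξ)) * Complex.I_mul_I
  rw [e] at h2
  refine h2.mono ?_
  apply Real.le_sqrt_of_sq_le
  rw [le_div_iff₀ hv]
  refine le_trans (le_of_eq ?_) hF
  unfold Ff
  rw [norm_mul, norm_neg, Complex.norm_I, Complex.norm_real, norm_pow, Real.norm_eq_abs,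
    abs_of_pos (inv_pos.2 h0)]
  rw [hw]; ring

lemma Mult.triv {s : ℝ} (hs : 0 < s) :
    Mult (fun ξ => ξ * Complex.exp (-(s * ξ ^ 2 / 2))) √(1 / s) := by
  have hi : Integrable (fun x => x / s * gk s x) :=
    ((gk_integrable_pow hs 1).const_mul (1 / s)).congr
      (Filter.Eventually.of_forall fun z => by simp only; ring)
  have h1 := Mult.ft hi
  simp only [gk_ft' hs] at h1
  have h2 := h1.const_mul (-I)
  have e : (fun ξ : ℝ => -I * (I * ξ * Complex.exp (-(s * ξ ^ 2 / 2)))) =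
      fun ξ : ℝ => ξ * Complex.exp (-(s * ξ ^ 2 / 2)) := by
    ext ξ
    linear_combination -(ξ * Complex.exp (-(s * ξ ^ 2 / 2))) * Complex.I_mul_I
  rw [e] at h2
  refine h2.mono ?_
  rw [norm_neg, Complex.norm_I, one_mul]
  set r := √s with hr
  have hr0 : 0 < r := by positivity
  have hrs : r ^ 2 = s := Real.sq_sqrt hs.le
  have hb : ∀ x, |x / s * gk s x| ≤ 1 / (2 * s * r) * (x ^ 2 * gk s x) + r / (2 * s) * gk s x := by
    intro x
    rw [abs_mul, abs_div, abs_of_pos hs, abs_of_pos (gk_pos hs x)]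
    have h3 : |x| / s ≤ 1 / (2 * s * r) * x ^ 2 + r / (2 * s) := by
      have : 1 / (2 * s * r) * x ^ 2 + r / (2 * s) - |x| / s = (|x| - r) ^ 2 / (2 * s * r) := by
        rw [← sq_abs x]; field_simp; ring
      have : 0 ≤ (|x| - r) ^ 2 / (2 * s * r) := by positivity
      linarith
    have := mul_le_mul_of_nonneg_right h3 (gk_pos hs x).le
    linarith
  have J1 := (gk_integrable_pow hs 2).const_mul (1 / (2 * s * r))
  have J2 := (gk_integrable hs).const_mul (r / (2 * s))
  have := integral_mono hi.abs (J1.add J2) hb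
  refine this.trans (le_of_eq ?_)
  simp only [Pi.add_apply]
  rw [integral_add J1 J2, integral_const_mul, integral_const_mul, gk_var hs, gk_integral hs,
    Real.sqrt_div zero_le_one, Real.sqrt_one, ← hr, ← hrs]
  field_simp; ring

/-- Multi-block estimate. -/
lemma Mult.blocks {lam : ℝ} (h0 : 0 < lam) {φ : ℝ → ℂ} (hφ : Mult φ 1)
    (hself : ∀ ξ : ℝ, φ ξ = Complex.cos ξ * φ (lam * ξ)) {J : ℕ} {a m : ℕ → ℕ}
    (hdis : ∀ i < J, ∀ k < J, i ≠ k →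
      Disjoint (Finset.Ico (a i) (a i + m i)) (Finset.Ico (a k) (a k + m k)))
    {s δ : ℝ} (hs : 0 < s) (hF : ∀ i < J, Ff lam (m i) (s * (lam⁻¹ ^ 2) ^ (a i)) ≤ δ) :
    Mult (fun ξ => ξ ^ J * Complex.exp (-(J * s * ξ ^ 2 / 2)) * φ ξ) (√(δ / s) ^ J) := by
  classical
  have hiter : ∀ N : ℕ, ∀ ξ : ℝ, φ ξ =
      (∏ n ∈ Finset.range N, Complex.cos (((lam ^ n : ℝ) : ℂ) * ξ)) * φ (lam ^ N * ξ) := by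
    intro N
    induction N with
    | zero => intro ξ; simp
    | succ N ih =>
      intro ξ
      rw [ih ξ, hself (lam ^ N * ξ), Finset.prod_range_succ]
      push_cast
      rw [pow_succ, ← mul_assoc lam, mul_comm lam (lam ^ N)]; ring
  set U := (Finset.range J).biUnion fun i => Finset.Ico (a i) (a i + m i) with hU
  obtain ⟨N, hN⟩ : ∃ N, U ⊆ Finset.range N := U.exists_nat_subset_range
  have m1 : Mult (fun ξ => ∏ i ∈ Finset.range J, (ξ * Complex.exp (-(s * ξ ^ 2 / 2)) *
      ∏ n ∈ Finset.Ico (a i) (a i + m i), Complex.cos (((lam ^ n : ℝ) : ℂ) * ξ)))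
      (∏ i ∈ Finset.range J, √(δ / s)) :=
    Mult.prod _ fun i hi => Mult.block h0 _ _ hs (hF i (Finset.mem_range.1 hi))
  have m2 : Mult (fun ξ => ∏ n ∈ Finset.range N \ U, Complex.cos (((lam ^ n : ℝ) : ℂ) * ξ))
      (∏ n ∈ Finset.range N \ U, 1) := Mult.prod _ fun n _ => Mult.cos _
  have m3 := (m1.mul m2).mul (hφ.scale (s := lam ^ N) (by positivity))
  have e : (fun ξ : ℝ => (∏ i ∈ Finset.range J, ((ξ : ℂ) * Complex.exp (-(s * ξ ^ 2 / 2)) *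
      ∏ n ∈ Finset.Ico (a i) (a i + m i), Complex.cos (((lam ^ n : ℝ) : ℂ) * ξ))) *
      (∏ n ∈ Finset.range N \ U, Complex.cos (((lam ^ n : ℝ) : ℂ) * ξ)) * φ (lam ^ N * ξ)) =
      (fun ξ : ℝ => ξ ^ J * Complex.exp (-(J * s * ξ ^ 2 / 2)) * φ ξ) := by
    ext ξ
    rw [hiter N ξ, ← Finset.prod_sdiff hN, Finset.prod_mul_distrib, Finset.prod_mul_distrib,
      Finset.prod_const, Finset.prod_const, Finset.card_range, ← Complex.exp_nat_mul, hU,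
      Finset.prod_biUnion]
    · rw [show (J : ℂ) * -(s * ξ ^ 2 / 2) = -(J * s * ξ ^ 2 / 2) by ring]; ring
    · intro i hi k hk hik
      exact hdis i (by simpa using hi) k (by simpa using hk) hik
  rw [e] at m3
  simpa using m3

lemma Mult.pow_triv {φ : ℝ → ℂ} (hφ : Mult φ 1) {s : ℝ} (hs : 0 < s) (J : ℕ) :
    Mult (fun ξ => ξ ^ J * Complex.exp (-(J * s * ξ ^ 2 / 2)) * φ ξ) (√(1 / s) ^ J) := by
  have m1 : Mult (fun ξ => ∏ i ∈ Finset.range J, (ξ * Complex.exp (-(s * ξ ^ 2 / 2))))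
      (∏ i ∈ Finset.range J, √(1 / s)) := Mult.prod _ fun i hi => Mult.triv hs
  have m3 := m1.mul hφ
  have e : (fun ξ : ℝ => (∏ i ∈ Finset.range J, ((ξ : ℂ) * Complex.exp (-(s * ξ ^ 2 / 2)))) * φ ξ) =
      (fun ξ : ℝ => ξ ^ J * Complex.exp (-(J * s * ξ ^ 2 / 2)) * φ ξ) := by
    ext ξ
    rw [Finset.prod_const, Finset.card_range, mul_pow, ← Complex.exp_nat_mul,
      show (J : ℂ) * -(s * ξ ^ 2 / 2) = -(J * s * ξ ^ 2 / 2) by ring]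
  rw [e] at m3
  simpa using m3
end mult


section deriv

lemma mv_bound {f f' : ℝ → ℂ} (hf : ∀ y, 0 < y → HasDerivAt f (f' y) y)
    {B B' : ℝ → ℝ} (hB : ∀ y, 0 < y → HasDerivAt B (B' y) y) {u w : ℝ} (hu : 0 < u) (huw : u ≤ w)
    (hb : ∀ t ∈ Set.Icc u w, ‖f' t‖ ≤ B' t) : ‖f w - f u‖ ≤ B w - B u := by
  refine image_norm_le_of_norm_deriv_right_le_deriv_boundary' (f := fun t => f t - f u)
    (f' := f') (a := u) (b := w) (B := fun t => B t - B u) (B' := B') ?_ ?_ ?_ ?_ ?_ ?_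
    (Set.right_mem_Icc.2 huw)
  · intro t ht
    exact ((hf t (hu.trans_le ht.1)).sub_const _).continuousAt.continuousWithinAt
  · intro t ht
    exact ((hf t (hu.trans_le ht.1)).sub_const _).hasDerivWithinAt
  · simp
  · intro t ht
    exact ((hB t (hu.trans_le ht.1)).sub_const _).continuousAt.continuousWithinAt
  · intro t ht
    exact ((hB t (hu.trans_le ht.1)).sub_const _).hasDerivWithinAt
  · intro t ht
    exact hb t ⟨ht.1, ht.2.le⟩

lemma deriv_down {G : ℕ → ℝ → ℂ} (hG : ∀ k, ∀ y, 0 < y → HasDerivAt (G k) (G (k + 1) y) y)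
    (hb : ∀ k : ℕ, ∀ y, 0 < y → ‖G k y‖ ≤ (k / y) ^ k) {j : ℕ} {δ Y : ℝ} (hδ : 0 ≤ δ) (hY : 0 < Y)
    (hj : ∀ y, 0 < y → y ≤ Y → ‖G j y‖ ≤ (j * δ / y) ^ j) :
    ∀ i k : ℕ, 1 ≤ k → k + i = j → ∀ y, 0 < y → y ≤ Y →
      ‖G k y‖ ≤ (j * δ) ^ j * ((k - 1).factorial / (j - 1).factorial : ℝ) * (y ^ k)⁻¹ +
        (∑ l ∈ Finset.Ico k j, (l : ℝ) ^ l) / Y ^ k := by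
  intro i
  induction i with
  | zero =>
    intro k hk hkj y hy hyY
    obtain rfl : k = j := by omega
    have h1 : ((k - 1).factorial : ℝ) ≠ 0 := by positivity
    rw [div_self h1, Finset.Ico_self, Finset.sum_empty, zero_div, add_zero, mul_one,
      ← div_eq_mul_inv, ← div_pow]
    exact hj y hy hyY
  | succ i ih =>
    intro k hk hkj y hy hyY
    have hi := ih (k + 1) (by omega) (by omega)
    set a := (j * δ) ^ j * (((k + 1 - 1).factorial : ℝ) / (j - 1).factorial)
    set c := (∑ l ∈ Finset.Ico (k + 1) j, (l : ℝ) ^ l) / Y ^ (k + 1)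
    have hc : 0 ≤ c := by positivity
    have ha : 0 ≤ a := by positivity
    have hk0 : (0 : ℝ) < k := by exact_mod_cast hk
    have hB : ∀ t : ℝ, 0 < t → HasDerivAt (fun t : ℝ => -(a / k) * (t ^ k)⁻¹ + c * t)
        (a * (t ^ (k + 1))⁻¹ + c) t := by
      intro t ht
      have h1 := ((hasDerivAt_pow k t).inv (by positivity)).const_mul (-(a / k))
      have h2 := h1.add ((hasDerivAt_id t).const_mul c)
      refine h2.congr_deriv ?_
      obtain ⟨k', rfl⟩ : ∃ k', k = k' + 1 := ⟨k - 1, by omega⟩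
      have : ((k' : ℝ) + 1) ≠ 0 := by positivity
      push_cast
      field_simp
      try simp
      try ring
    have := mv_bound (hG k) hB hy hyY (fun t ht => hi t (hy.trans_le ht.1) ht.2)
    have h3 := hb k Y hY
    have h4 : ‖G k y‖ ≤ ‖G k Y‖ + ‖G k Y - G k y‖ := by
      have := norm_sub_le (G k Y) (G k Y - G k y)
      rwa [sub_sub_cancel] at this
    have e1 : (j * δ) ^ j * (((k - 1).factorial : ℝ) / (j - 1).factorial) = a / k := by
      simp only [a, Nat.add_sub_cancel]
      have : (k.factorial : ℝ) = k * (k - 1).factorial := by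
        exact_mod_cast (Nat.mul_factorial_pred (by omega)).symm
      rw [this]; field_simp
    have e2 : (∑ l ∈ Finset.Ico k j, (l : ℝ) ^ l) / Y ^ k = (k / Y) ^ k + c * Y := by
      rw [Finset.sum_eq_sum_Ico_succ_bot (by omega), add_div, div_pow]
      simp only [c]
      rw [pow_succ]; field_simp
    rw [e1, e2]
    have h5 : 0 ≤ a / k * (Y ^ k)⁻¹ := by positivity
    have h6 : 0 ≤ c * y := by positivity
    linarith

lemma fact_bound {j : ℕ} (hj : 1 ≤ j) {δ : ℝ} (hδ : 0 ≤ δ) :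
    (j * δ) ^ j * ((1 - 1).factorial / (j - 1).factorial : ℝ) ≤ j * (exp 1 * δ) ^ j := by
  have h1 : (j : ℝ) ^ j / j.factorial ≤ exp j := Real.pow_div_factorial_le_exp _ (by positivity) _
  have h2 : (j.factorial : ℝ) = j * (j - 1).factorial := by
    exact_mod_cast (Nat.mul_factorial_pred (by omega)).symm
  have hj0 : (0:ℝ) < j := by exact_mod_cast hj
  have e : (j * δ) ^ j * ((1 - 1).factorial / (j - 1).factorial : ℝ) =
      j * δ ^ j * ((j : ℝ) ^ j / j.factorial) := by
    rw [h2, mul_pow]; simp; field_simp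
  rw [e, mul_pow, exp_one_pow]
  have := mul_le_mul_of_nonneg_left h1 (show 0 ≤ j * δ ^ j by positivity)
  linarith

lemma sum_bound (j : ℕ) : ∑ l ∈ Finset.Ico 1 j, (l : ℝ) ^ l ≤ (j : ℝ) ^ (j + 1) := by
  have : ∀ l ∈ Finset.Ico 1 j, (l : ℝ) ^ l ≤ (j : ℝ) ^ j := by
    intro l hl
    rw [Finset.mem_Ico] at hl
    have h1 : (l : ℝ) ≤ j := by exact_mod_cast hl.2.le
    have h2 : (1 : ℝ) ≤ j := by exact_mod_cast (show 1 ≤ j by omega)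
    exact (pow_le_pow_left₀ (by positivity) h1 l).trans (pow_le_pow_right₀ h2 hl.2.le)
  refine (Finset.sum_le_card_nsmul _ _ _ this).trans ?_
  rw [nsmul_eq_mul, Nat.card_Ico, pow_succ, mul_comm]
  gcongr
  omega

lemma step_bound {G : ℕ → ℝ → ℂ} (hG : ∀ k, ∀ y, 0 < y → HasDerivAt (G k) (G (k + 1) y) y)
    (hb : ∀ k : ℕ, ∀ y, 0 < y → ‖G k y‖ ≤ (k / y) ^ k) {j : ℕ} (hj1 : 1 ≤ j) {δ Y : ℝ}
    (hδ : 0 ≤ δ) (hY : 0 < Y)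
    (hj : ∀ y, 0 < y → y ≤ Y → ‖G j y‖ ≤ (j * δ / y) ^ j) {u w : ℝ} (hu : 0 < u) (huw : u ≤ w)
    (hw : w ≤ Y) :
    ‖G 0 w - G 0 u‖ ≤ j * (exp 1 * δ) ^ j * (log w - log u) + (j : ℝ) ^ (j + 1) * (w / Y) := by
  set a := j * (exp 1 * δ) ^ j
  set c := (j : ℝ) ^ (j + 1) / Y
  have hc : 0 ≤ c := by positivity
  have hB : ∀ t : ℝ, 0 < t → HasDerivAt (fun t : ℝ => a * log t + c * t) (a * t⁻¹ + c) t := by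
    intro t ht
    have := ((Real.hasDerivAt_log ht.ne').const_mul a).add ((hasDerivAt_id t).const_mul c)
    exact this.congr_deriv (by ring)
  have := mv_bound (hG 0) hB hu huw (fun t ht => by
    have ht0 : 0 < t := hu.trans_le ht.1
    have := deriv_down hG hb hδ hY hj (j - 1) 1 le_rfl (by omega) t ht0 (ht.2.trans hw)
    rw [pow_one, pow_one] at this
    refine this.trans (add_le_add ?_ ?_)
    · exact mul_le_mul_of_nonneg_right (fact_bound hj1 hδ) (by positivity)
    · exact div_le_div_of_nonneg_right (sum_bound j) hY.le)
  refine this.trans ?_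
  have h1 : 0 ≤ c * u := by positivity
  have e : (j : ℝ) ^ (j + 1) * (w / Y) = c * w := by simp only [c]; ring
  rw [e]
  linarith

/-- Error at scale `j`. -/
noncomputable def epsj (δ ℓ N0 g : ℝ) (j : ℕ) : ℝ :=
  j * (exp 1 * δ) ^ j * (2 * ℓ * (N0 * g ^ (2 * (j + 1)))) +
    (j : ℝ) ^ (j + 1) * exp (-(ℓ * (N0 * g ^ (2 * j))))

lemma epsj_nonneg {δ ℓ N0 g : ℝ} (hδ : 0 ≤ δ) (hℓ : 0 ≤ ℓ) (hN : 0 ≤ N0) (hg : 0 ≤ g) (j : ℕ) :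
    0 ≤ epsj δ ℓ N0 g j := by unfold epsj; positivity

lemma steps_bound {G : ℕ → ℝ → ℂ} (hG : ∀ k, ∀ y, 0 < y → HasDerivAt (G k) (G (k + 1) y) y)
    (hb : ∀ k : ℕ, ∀ y, 0 < y → ‖G k y‖ ≤ (k / y) ^ k) {δ ℓ N0 g : ℝ} (hδ : 0 ≤ δ)
    (hℓ : 0 ≤ ℓ) (hN : 0 ≤ N0) (hg : 1 ≤ g)
    (hj : ∀ j : ℕ, 1 ≤ j → ∀ y, 0 < y → y ≤ exp (-(ℓ * (N0 * g ^ (2 * j)))) →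
      ‖G j y‖ ≤ (j * δ / y) ^ j) {J : ℕ} (hJ : 1 ≤ J) (n : ℕ) :
    ‖G 0 (exp (-(2 * ℓ * (N0 * g ^ (2 * J))))) - G 0 (exp (-(2 * ℓ * (N0 * g ^ (2 * (J + n))))))‖ ≤
      ∑ i ∈ Finset.range n, epsj δ ℓ N0 g (J + i) := by
  induction n with
  | zero => simp
  | succ n ih =>
    rw [Finset.sum_range_succ]
    set q := J + n with hq
    have mono : g ^ (2 * q) ≤ g ^ (2 * (q + 1)) := pow_le_pow_right₀ hg (by omega)
    have hstep := step_bound hG hb (j := q) (by omega) hδ (exp_pos _) (hj q (by omega))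
      (u := exp (-(2 * ℓ * (N0 * g ^ (2 * (q + 1)))))) (w := exp (-(2 * ℓ * (N0 * g ^ (2 * q)))))
      (exp_pos _) (by gcongr) (by
        apply exp_le_exp.2
        have : 0 ≤ ℓ * (N0 * g ^ (2 * q)) := by positivity
        linarith)
    rw [log_exp, log_exp, ← exp_sub] at hstep
    have h2 : ‖G 0 (exp (-(2 * ℓ * (N0 * g ^ (2 * q))))) -
        G 0 (exp (-(2 * ℓ * (N0 * g ^ (2 * (q + 1))))))‖ ≤ epsj δ ℓ N0 g q := by
      refine hstep.trans ?_
      unfold epsj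
      refine add_le_add ?_ ?_
      · refine mul_le_mul_of_nonneg_left ?_ (by positivity)
        have : 0 ≤ 2 * ℓ * (N0 * g ^ (2 * q)) := by positivity
        linarith
      · refine mul_le_mul_of_nonneg_left (exp_le_exp.2 ?_) (by positivity)
        linarith
    have h3 := norm_sub_le_norm_sub_add_norm_sub (G 0 (exp (-(2 * ℓ * (N0 * g ^ (2 * J))))))
      (G 0 (exp (-(2 * ℓ * (N0 * g ^ (2 * q))))))
      (G 0 (exp (-(2 * ℓ * (N0 * g ^ (2 * (q + 1)))))))
    rw [show J + (n + 1) = q + 1 by omega]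
    linarith

lemma epsj_summable {δ ℓ N0 g : ℝ} (hδ : 0 ≤ δ) (hℓ : 0 < ℓ) (hN : 0 < N0) (hg : 1 < g)
    (hθ : exp 1 * δ * g ^ 2 < 1) : Summable (epsj δ ℓ N0 g) := by
  unfold epsj
  refine Summable.add ?_ ?_
  · set θ := exp 1 * δ * g ^ 2 with hθd
    have h0 : 0 ≤ θ := by positivity
    have h := (summable_pow_mul_geometric_of_norm_lt_one 1 (r := θ)
      (by rwa [Real.norm_eq_abs, abs_of_nonneg h0])).mul_left (2 * ℓ * N0 * g ^ 2)
    refine h.congr fun j => ?_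
    rw [hθd, mul_pow, ← pow_mul g 2 j, pow_one, mul_add, pow_add]; ring
  · have hg2 : 1 < g ^ 2 := by nlinarith
    have hlim := tendsto_pow_const_div_const_pow_of_one_lt 2 hg2
    have hev := (hlim.eventually (gt_mem_nhds (show (0 : ℝ) < ℓ * N0 / 3 by positivity)))
    refine Summable.of_norm_bounded_eventually_nat Real.summable_exp_neg_nat ?_
    filter_upwards [hev, Filter.eventually_ge_atTop 1] with j hj hj1
    have hj0 : (1 : ℝ) ≤ j := by exact_mod_cast hj1
    have hjp : (0 : ℝ) < j := by linarith
    rw [Real.norm_eq_abs, abs_of_nonneg (by positivity)]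
    rw [div_lt_iff₀ (by positivity), ← pow_mul] at hj
    have hlog : log j ≤ j := (log_le_sub_one_of_pos hjp).trans (by linarith)
    have e : (j : ℝ) ^ (j + 1) = exp ((j + 1) * log j) := by
      have := exp_nat_mul (log (j : ℝ)) (j + 1)
      rw [exp_log hjp] at this
      rw [← this]; push_cast; ring_nf
    rw [e, ← exp_add]
    apply exp_le_exp.2
    have h1 : ((j : ℝ) + 1) * log j ≤ (j + 1) * j := by gcongr
    nlinarith
end deriv


section concl
open Complex (I)

/-- closeness of two measures on trigonometric polynomials -/
def TrigClose (μ ν : Measure ℝ) (ε : ℝ) : Prop :=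
  ∀ (S : Finset ℤ) (f : ℤ → ℝ) (c : ℤ → ℂ),
    (∀ x : ℝ, ‖∑ n ∈ S, c n * Complex.exp (I * f n * x)‖ ≤ 1) →
    ‖∑ n ∈ S, c n * (∫ t, Complex.exp (I * f n * t) ∂μ) -
      ∑ n ∈ S, c n * (∫ t, Complex.exp (I * f n * t) ∂ν)‖ ≤ ε

lemma int_trig (μ : Measure ℝ) [IsProbabilityMeasure μ] (S : Finset ℤ) (f : ℤ → ℝ) (c : ℤ → ℂ) :
    ∫ t : ℝ, ∑ n ∈ S, c n * Complex.exp (I * f n * t) ∂μ =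
      ∑ n ∈ S, c n * (∫ t, Complex.exp (I * f n * t) ∂μ) := by
  rw [integral_finsetSum]
  · simp [integral_const_mul]
  · intro n _
    refine Integrable.const_mul ?_ _
    refine (integrable_const (1:ℝ)).mono (by fun_prop) ?_
    filter_upwards with t
    rw [show I * f n * t = ((f n * t : ℝ) : ℂ) * I by push_cast; ring,
      Complex.norm_exp_ofReal_mul_I]
    simp

lemma close_cont {μ ν : Measure ℝ} [IsProbabilityMeasure μ] [IsProbabilityMeasure ν] {ε : ℝ}
    (hε : 0 < ε) (hε1 : ε ≤ 1) (h : TrigClose μ ν ε) (ψ : C(AddCircle (1:ℝ), ℂ)) (hψ : ‖ψ‖ ≤ 1) :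
    ‖∫ x : ℝ, ψ (x : AddCircle (1:ℝ)) ∂μ - ∫ x : ℝ, ψ (x : AddCircle (1:ℝ)) ∂ν‖ ≤ 4 * ε := by
  have : Fact ((0:ℝ) < 1) := ⟨one_pos⟩
  have hmem : ψ ∈ (Submodule.span ℂ (Set.range (@fourier (1:ℝ)))).topologicalClosure := by
    rw [span_fourier_closure_eq_top]; trivial
  have hmem' : ψ ∈ closure (Submodule.span ℂ (Set.range (@fourier (1:ℝ))) : Set C(AddCircle (1:ℝ), ℂ)) := hmem
  obtain ⟨g, hg, hgd⟩ := Metric.mem_closure_iff.1 hmem' ε hε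
  obtain ⟨c, hc⟩ := Finsupp.mem_span_range_iff_exists_finsupp.1 hg
  have hgx : ∀ x : ℝ, g (x : AddCircle (1:ℝ)) =
      ∑ n ∈ c.support, c n * Complex.exp (I * ((2 * π * n : ℝ) : ℂ) * x) := by
    intro x
    rw [← hc, Finsupp.sum, ContinuousMap.sum_apply]
    refine Finset.sum_congr rfl fun n _ => ?_
    rw [ContinuousMap.smul_apply, fourier_coe_apply, smul_eq_mul]
    congr 2; push_cast; ring
  have hgn : ‖g‖ ≤ 1 + ε := by
    have h1 : ‖ψ - g‖ < ε := by rwa [← dist_eq_norm]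
    calc ‖g‖ = ‖ψ - (ψ - g)‖ := by congr 1; abel
      _ ≤ ‖ψ‖ + ‖ψ - g‖ := norm_sub_le _ _
      _ ≤ 1 + ε := by linarith
  have hcl := h c.support (fun n => 2 * π * n) (fun n => ((1 + ε : ℝ) : ℂ)⁻¹ * c n) (by
    intro x
    simp only [mul_assoc, ← Finset.mul_sum]
    have e := hgx x
    simp only [mul_assoc] at e
    rw [← e, norm_mul, norm_inv, Complex.norm_real, Real.norm_of_nonneg (by linarith),
      inv_mul_le_iff₀ (by linarith), mul_one]
    exact (g.norm_coe_le_norm _).trans hgn)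
  rw [← int_trig, ← int_trig] at hcl
  have e2 : ∀ x : ℝ, ∑ n ∈ c.support, ((1 + ε : ℝ) : ℂ)⁻¹ * c n * Complex.exp (I * ((2 * π * n : ℝ) : ℂ) * x) =
     ((1 + ε : ℝ) : ℂ)⁻¹ * g (x : AddCircle (1:ℝ)) := by
    intro x; rw [hgx, Finset.mul_sum]; exact Finset.sum_congr rfl fun n _ => by ring
  simp only [e2] at hcl
  rw [integral_const_mul, integral_const_mul, ← mul_sub, norm_mul, norm_inv, Complex.norm_real,
    Real.norm_of_nonneg (by linarith), inv_mul_le_iff₀ (by linarith)] at hcl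
  have hint : ∀ (ρ : Measure ℝ) [IsProbabilityMeasure ρ] (k : C(AddCircle (1:ℝ), ℂ)),
      Integrable (fun x : ℝ => k (x : AddCircle (1:ℝ))) ρ := by
    intro ρ _ k
    refine (integrable_const (‖k‖ : ℝ)).mono ?_ ?_
    · exact (k.continuous.comp (AddCircle.continuous_mk' 1)).aestronglyMeasurable
    · filter_upwards with t
      simpa using k.norm_coe_le_norm _
  have hd : ∀ (ρ : Measure ℝ) [IsProbabilityMeasure ρ],
      ‖∫ x : ℝ, ψ (x : AddCircle (1:ℝ)) ∂ρ - ∫ x : ℝ, g (x : AddCircle (1:ℝ)) ∂ρ‖ ≤ ε := by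
    intro ρ _
    rw [← integral_sub (hint ρ ψ) (hint ρ g)]
    refine (norm_integral_le_of_norm_le_const (C := ε) ?_).trans (by simp)
    filter_upwards with t
    have := (ψ - g).norm_coe_le_norm (t : AddCircle (1:ℝ))
    rw [← dist_eq_norm] at this
    exact this.trans hgd.le
  have a1 := hd μ
  have a2 := hd ν
  rw [norm_sub_rev] at a2
  have : ∫ x : ℝ, ψ (x : AddCircle (1:ℝ)) ∂μ - ∫ x : ℝ, ψ (x : AddCircle (1:ℝ)) ∂ν =
    (∫ x : ℝ, ψ (x : AddCircle (1:ℝ)) ∂μ - ∫ x : ℝ, g (x : AddCircle (1:ℝ)) ∂μ) +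
    (∫ x : ℝ, g (x : AddCircle (1:ℝ)) ∂μ - ∫ x : ℝ, g (x : AddCircle (1:ℝ)) ∂ν) +
    (∫ x : ℝ, g (x : AddCircle (1:ℝ)) ∂ν - ∫ x : ℝ, ψ (x : AddCircle (1:ℝ)) ∂ν) := by ring
  rw [this]
  refine (norm_add₃_le).trans ?_
  nlinarith

lemma close_compact {μ ν : Measure ℝ} [IsProbabilityMeasure μ] [IsProbabilityMeasure ν] {ε : ℝ}
    (hε : 0 < ε) (hε1 : ε ≤ 1) (h : TrigClose μ ν ε) (hν : ν ≪ volume) {K : Set ℝ}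
    (hK : IsCompact K) (hK0 : volume K = 0) : μ.real K ≤ 4 * ε := by
  have : Fact ((0:ℝ) < 1) := ⟨one_pos⟩
  set q : ℝ → AddCircle (1:ℝ) := fun x => (x : AddCircle (1:ℝ)) with hq
  have hqc : Continuous q := AddCircle.continuous_mk' 1
  set F := q '' K with hF
  have hFc : IsClosed F := (hK.image hqc).isClosed
  have hpre : q ⁻¹' F = ⋃ n : ℤ, (fun x => (n:ℝ) + x) ⁻¹' K := by
    ext x
    simp only [hF, Set.mem_preimage, Set.mem_image, Set.mem_iUnion, hq]
    constructor
    · rintro ⟨y, hy, hxy⟩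
      have h0 : ((y - x : ℝ) : AddCircle (1:ℝ)) = 0 := by
        rw [AddCircle.coe_sub, hxy, sub_self]
      obtain ⟨n, hn⟩ := (AddCircle.coe_eq_zero_iff _).1 h0
      refine ⟨n, ?_⟩
      have : (n:ℝ) + x = y := by simp at hn; linarith
      rwa [this]
    · rintro ⟨n, hn⟩
      refine ⟨_, hn, ?_⟩
      have h0 : (((n:ℝ) : ℝ) : AddCircle (1:ℝ)) = 0 :=
        (AddCircle.coe_eq_zero_iff _).2 ⟨n, by simp⟩
      rw [AddCircle.coe_add, h0, zero_add]
  have hnull : ν (q ⁻¹' F) = 0 := by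
    apply hν
    rw [hpre, measure_iUnion_null_iff]
    intro n
    rw [measure_preimage_add, hK0]
  have : IsProbabilityMeasure (μ.map q) := Measure.isProbabilityMeasure_map hqc.aemeasurable
  have : IsProbabilityMeasure (ν.map q) := Measure.isProbabilityMeasure_map hqc.aemeasurable
  have ht : Filter.Tendsto (fun n => ∫ x : ℝ, ((hFc.apprSeq n (q x) : ℝ)) ∂ν) Filter.atTop (nhds 0) := by
    have := HasOuterApproxClosed.tendsto_lintegral_apprSeq hFc (ν.map q)
    rw [Measure.map_apply hqc.measurable hFc.measurableSet, hnull] at this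
    have h2 := (ENNReal.tendsto_toReal (by simp : (0:ENNReal) ≠ ⊤)).comp this
    refine h2.congr fun n => ?_
    simp only [Function.comp]
    rw [lintegral_map (by
      exact ((ENNReal.continuous_coe.comp (hFc.apprSeq n).continuous)).measurable) hqc.measurable]
    rw [integral_eq_lintegral_of_nonneg_ae]
    · simp
    · filter_upwards with x; positivity
    · exact (NNReal.continuous_coe.comp ((hFc.apprSeq n).continuous.comp hqc)).aestronglyMeasurable
  have hb : ∀ n, μ.real K ≤ ∫ x : ℝ, ((hFc.apprSeq n (q x) : ℝ)) ∂ν + 4 * ε := by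
    intro n
    set ψ : C(AddCircle (1:ℝ), ℂ) := ⟨fun x => ((hFc.apprSeq n x : ℝ) : ℂ),
      Complex.continuous_ofReal.comp (NNReal.continuous_coe.comp (hFc.apprSeq n).continuous)⟩ with hψ
    have h1 : ‖ψ‖ ≤ 1 := by
      rw [ContinuousMap.norm_le _ zero_le_one]
      intro x
      have := HasOuterApproxClosed.apprSeq_apply_le_one hFc n x
      simp only [hψ, ContinuousMap.coe_mk, Complex.norm_real]
      rw [Real.norm_of_nonneg (NNReal.coe_nonneg _)]
      exact_mod_cast this
    have h2 := close_cont hε hε1 h ψ h1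
    simp only [hψ, ContinuousMap.coe_mk] at h2
    rw [integral_complex_ofReal, integral_complex_ofReal, ← Complex.ofReal_sub, Complex.norm_real] at h2
    have h3 := (le_abs_self _).trans h2
    have hint : Integrable (fun x : ℝ => ((hFc.apprSeq n (q x) : ℝ))) μ := by
      refine (integrable_const (1 : ℝ)).mono ?_ ?_
      · exact (NNReal.continuous_coe.comp ((hFc.apprSeq n).continuous.comp hqc)).aestronglyMeasurable
      · filter_upwards with t
        have := HasOuterApproxClosed.apprSeq_apply_le_one hFc n (q t)
        rw [Real.norm_of_nonneg (NNReal.coe_nonneg _)]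
        simpa using this
    have h4 : μ.real K ≤ ∫ x : ℝ, ((hFc.apprSeq n (q x) : ℝ)) ∂μ := by
      rw [← integral_indicator_one hK.measurableSet]
      refine integral_mono ?_ hint ?_
      · exact (integrable_const (1:ℝ)).indicator hK.measurableSet
      · intro x
        by_cases hx : x ∈ K
        · have := HasOuterApproxClosed.apprSeq_apply_eq_one hFc n (Set.mem_image_of_mem q hx)
          simp [hx, this]
        · simp [hx]
    simp only [hq] at h4 ⊢
    linarith
  have := ge_of_tendsto' (ht.add_const (4 * ε)) hb
  simpa using this

lemma ac_of_close {μ : Measure ℝ} [IsProbabilityMeasure μ]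
    (h : ∀ ε > 0, ∃ ν : Measure ℝ, IsProbabilityMeasure ν ∧ ν ≪ volume ∧ TrigClose μ ν ε) :
    μ ≪ volume := by
  refine Measure.AbsolutelyContinuous.mk fun s hs hs0 => ?_
  by_contra hne
  obtain ⟨K, hKs, hK, hlt⟩ := hs.exists_lt_isCompact (μ := μ) (pos_iff_ne_zero.2 hne)
  have hK0 : volume K = 0 := measure_mono_null hKs hs0
  have hr : 0 < μ.real K := ENNReal.toReal_pos hlt.ne' (measure_ne_top _ _)
  obtain ⟨ν, _, h1, h2⟩ := h (min 1 (μ.real K / 8)) (by positivity)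
  have := close_compact (by positivity) (min_le_left _ _) h2 h1 hK hK0
  have := min_le_right 1 (μ.real K / 8)
  linarith

lemma ac_of_gauss {μ : Measure ℝ} [IsProbabilityMeasure μ]
    (h : ∀ ε > 0, ∃ y : ℝ, 0 < y ∧ ∀ (S : Finset ℤ) (f : ℤ → ℝ) (c : ℤ → ℂ),
    (∀ x : ℝ, ‖∑ n ∈ S, c n * Complex.exp (I * f n * x)‖ ≤ 1) →
    ‖∑ n ∈ S, c n * Complex.exp (-(y * f n ^ 2 / 2)) * (∫ t, Complex.exp (I * f n * t) ∂μ) -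
      ∑ n ∈ S, c n * (∫ t, Complex.exp (I * f n * t) ∂μ)‖ ≤ ε) : μ ≪ volume := by
  refine ac_of_close fun ε hε => ?_
  obtain ⟨y, hy, H⟩ := h ε hε
  have hv : y.toNNReal ≠ 0 := by simpa using hy
  refine ⟨μ.conv (ProbabilityTheory.gaussianReal 0 y.toNNReal), inferInstance,
    Measure.conv_absolutelyContinuous (ProbabilityTheory.gaussianReal_absolutelyContinuous 0 hv), ?_⟩
  intro S f c hb
  rw [norm_sub_rev]
  refine le_of_eq_of_le ?_ (H S f c hb)
  congr 2
  refine Finset.sum_congr rfl fun n _ => ?_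
  have e : ∀ (ρ : Measure ℝ) (t : ℝ), ∫ x : ℝ, Complex.exp (I * t * x) ∂ρ = charFun ρ t := by
    intro ρ t; rw [charFun_apply_real]; congr 1; ext x; congr 1; ring
  rw [e, e, charFun_conv, ProbabilityTheory.charFun_gaussianReal]
  rw [Real.coe_toNNReal _ hy.le]
  push_cast
  ring_nf
end concl


section selfsim
open Complex (I)

/-- binary digit sign -/
noncomputable def dig (n : ℕ) (x : ℝ) : ℝ := if ⌊x * 2 ^ (n + 1)⌋ % 2 = 1 then (1 : ℝ) else -1

/-- random sum -/
noncomputable def PhiB (lam x : ℝ) : ℝ := ∑' n : ℕ, dig n x * lam ^ n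

lemma dig_meas (n : ℕ) : Measurable (dig n) := by
  unfold dig
  refine Measurable.ite ?_ measurable_const measurable_const
  have h : Measurable (fun x : ℝ => ⌊x * 2 ^ (n + 1)⌋) := Int.measurable_floor.comp (by fun_prop)
  exact h (MeasurableSet.of_discrete (s := {k : ℤ | k % 2 = 1}))

lemma dig_abs (n : ℕ) (x : ℝ) : |dig n x| = 1 := by
  unfold dig; split_ifs <;> simp

lemma dig_summable {lam : ℝ} (h0 : 0 < lam) (h1 : lam < 1) (x : ℝ) :
    Summable (fun n => dig n x * lam ^ n) := by
  refine Summable.of_norm_bounded (g := fun n => lam ^ n) (summable_geometric_of_lt_one h0.le h1) ?_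
  intro n
  rw [norm_mul, Real.norm_eq_abs, dig_abs, one_mul, Real.norm_of_nonneg (by positivity)]

lemma PhiB_meas {lam : ℝ} (h0 : 0 < lam) (h1 : lam < 1) : Measurable (PhiB lam) := by
  refine measurable_of_tendsto_metrizable (f := fun N x => ∑ n ∈ Finset.range N, dig n x * lam ^ n) ?_ ?_
  · intro N
    exact Finset.measurable_fun_sum _ fun n _ => (dig_meas n).mul_const _
  · rw [tendsto_pi_nhds]
    intro x
    exact (dig_summable h0 h1 x).hasSum.tendsto_sum_nat

lemma dig_half (n : ℕ) (u : ℝ) : dig (n + 1) (u / 2) = dig n u := by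
  unfold dig
  rw [show u / 2 * 2 ^ (n + 1 + 1) = u * 2 ^ (n + 1) by ring]

lemma dig_half' (n : ℕ) (u : ℝ) : dig (n + 1) (u / 2 + 1 / 2) = dig n u := by
  unfold dig
  rw [show (u / 2 + 1 / 2) * 2 ^ (n + 1 + 1) = u * 2 ^ (n + 1) + ((2 * 2 ^ n : ℤ) : ℝ) by push_cast; ring,
    Int.floor_add_intCast]
  simp [Int.add_mul_emod_self_left]

lemma PhiB_eq {lam : ℝ} (h0 : 0 < lam) (h1 : lam < 1) (x u : ℝ) (h : ∀ n, dig (n + 1) x = dig n u) :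
    PhiB lam x = dig 0 x + lam * PhiB lam u := by
  unfold PhiB
  rw [(dig_summable h0 h1 x).tsum_eq_zero_add, ← tsum_mul_left]
  simp only [pow_zero, mul_one, h]
  congr 1
  exact tsum_congr fun n => by ring

lemma bern_prob {lam : ℝ} (h0 : 0 < lam) (h1 : lam < 1) : IsProbabilityMeasure (bernoulliConv lam) := by
  have : IsProbabilityMeasure ((volume : Measure ℝ).restrict (Set.Ico (0 : ℝ) 1)) := ⟨by simp⟩
  exact Measure.isProbabilityMeasure_map (PhiB_meas h0 h1).aemeasurable

lemma bern_int {lam : ℝ} (h0 : 0 < lam) (h1 : lam < 1) (ξ : ℝ) :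
    ∫ t : ℝ, Complex.exp (I * ξ * t) ∂(bernoulliConv lam) =
      ∫ x in (0:ℝ)..1, Complex.exp (I * ξ * PhiB lam x) := by
  rw [intervalIntegral.integral_of_le zero_le_one, ← integral_Ico_eq_integral_Ioc]
  unfold bernoulliConv
  rw [integral_map]
  · rfl
  · exact (PhiB_meas h0 h1).aemeasurable
  · exact Continuous.aestronglyMeasurable (by fun_prop)

lemma bern_ii {lam : ℝ} (h0 : 0 < lam) (h1 : lam < 1) (ξ a b : ℝ) :
    IntervalIntegrable (fun x : ℝ => Complex.exp (I * ξ * PhiB lam x)) volume a b := by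
  refine (intervalIntegrable_const (c := (1:ℝ))).mono_fun ?_ ?_
  · have := PhiB_meas h0 h1
    exact Measurable.aestronglyMeasurable (by fun_prop)
  · filter_upwards with t
    rw [show I * ξ * PhiB lam t = ((ξ * PhiB lam t : ℝ) : ℂ) * I by push_cast; ring,
      Complex.norm_exp_ofReal_mul_I]
    simp

lemma bern_self {lam : ℝ} (h0 : 0 < lam) (h1 : lam < 1) (ξ : ℝ) :
    ∫ t : ℝ, Complex.exp (I * ξ * t) ∂(bernoulliConv lam) = Complex.cos ξ *
      ∫ t : ℝ, Complex.exp (I * ((lam * ξ : ℝ) : ℂ) * t) ∂(bernoulliConv lam) := by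
  rw [bern_int h0 h1, bern_int h0 h1]
  rw [← intervalIntegral.integral_add_adjacent_intervals (bern_ii h0 h1 ξ 0 (1/2)) (bern_ii h0 h1 ξ (1/2) 1)]
  have e1 : ∫ x in (0:ℝ)..(1/2), Complex.exp (I * ξ * PhiB lam x) =
      (2:ℂ)⁻¹ * (Complex.exp (-(I * ξ)) * ∫ x in (0:ℝ)..1, Complex.exp (I * ((lam * ξ : ℝ) : ℂ) * PhiB lam x)) := by
    have := intervalIntegral.integral_comp_div (a := (0:ℝ)) (b := 1)
      (fun x => Complex.exp (I * ξ * PhiB lam x)) (two_ne_zero (α := ℝ))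
    rw [zero_div] at this
    rw [← intervalIntegral.integral_const_mul, eq_inv_mul_iff_mul_eq₀ two_ne_zero]
    have h2 : (2:ℂ) * ∫ x in (0:ℝ)..(1/2), Complex.exp (I * ξ * PhiB lam x) =
      (2:ℝ) • ∫ x in (0:ℝ)..(1/2), Complex.exp (I * ξ * PhiB lam x) := by simp
    rw [h2, ← this, intervalIntegral.integral_of_le zero_le_one, intervalIntegral.integral_of_le zero_le_one,
      ← integral_Ico_eq_integral_Ioc, ← integral_Ico_eq_integral_Ioc]
    refine setIntegral_congr_fun measurableSet_Ico fun u hu => ?_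
    rw [PhiB_eq h0 h1 (u/2) u (fun n => dig_half n u), ← Complex.exp_add]
    have : dig 0 (u / 2) = -1 := by
      have hf : ⌊u / 2 * 2 ^ (0 + 1)⌋ = 0 := by
        rw [Int.floor_eq_iff]; push_cast; constructor <;> linarith [hu.1, hu.2]
      unfold dig; rw [hf]; simp
    rw [this]; congr 1; push_cast; ring
  have e2 : ∫ x in (1/2:ℝ)..1, Complex.exp (I * ξ * PhiB lam x) =
      (2:ℂ)⁻¹ * (Complex.exp (I * ξ) * ∫ x in (0:ℝ)..1, Complex.exp (I * ((lam * ξ : ℝ) : ℂ) * PhiB lam x)) := by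
    have := intervalIntegral.integral_comp_div_add (a := (0:ℝ)) (b := 1)
      (fun x => Complex.exp (I * ξ * PhiB lam x)) (two_ne_zero (α := ℝ)) (1/2)
    rw [zero_div, zero_add, show (1:ℝ)/2 + 1/2 = 1 by norm_num] at this
    rw [← intervalIntegral.integral_const_mul, eq_inv_mul_iff_mul_eq₀ two_ne_zero]
    have h2 : (2:ℂ) * ∫ x in (1/2:ℝ)..1, Complex.exp (I * ξ * PhiB lam x) =
      (2:ℝ) • ∫ x in (1/2:ℝ)..1, Complex.exp (I * ξ * PhiB lam x) := by simp
    rw [h2, ← this, intervalIntegral.integral_of_le zero_le_one, intervalIntegral.integral_of_le zero_le_one,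
      ← integral_Ico_eq_integral_Ioc, ← integral_Ico_eq_integral_Ioc]
    refine setIntegral_congr_fun measurableSet_Ico fun u hu => ?_
    rw [PhiB_eq h0 h1 (u/2+1/2) u (fun n => dig_half' n u), ← Complex.exp_add]
    have : dig 0 (u / 2 + 1/2) = 1 := by
      have hf : ⌊(u / 2 + 1/2) * 2 ^ (0 + 1)⌋ = 1 := by
        rw [Int.floor_eq_iff]; push_cast; constructor <;> linarith [hu.1, hu.2]
      unfold dig; rw [hf]; simp
    rw [this]; congr 1; push_cast; ring
  rw [e1, e2, Complex.cos]
  rw [show (ξ:ℂ) * I = I * ξ by ring, show -(ξ:ℂ) * I = -(I * ξ) by ring]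
  ring
end selfsim


section blockchoice

/-- A slot lemma: property at one scale. -/
lemma block_at {lam : ℝ} {P : Polynomial ℤ} (h0 : 0 < lam) (h1 : lam < 1) (hP : P ≠ 0)
    (hirr : Irreducible P) (hroot : Polynomial.aeval lam P = 0)
    (hpm : ∀ Q : Polynomial ℤ, Q ≠ 0 → (∀ n, Q.coeff n = -1 ∨ Q.coeff n = 0 ∨ Q.coeff n = 1) →
      Polynomial.aeval lam Q ≠ 0) {κ ℓ : ℝ} (hℓ : ℓ = log lam⁻¹)
    (hκ : κ * ℓ = log (mahlerMeasure P)) {m K : ℕ} (hm : 1 ≤ m) (hK : 1 ≤ K)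
    (hKm : (K : ℝ) + 1 ≤ m * (κ - 1) / 3) {t : ℝ} (ht : κ * m ≤ t) :
    ∃ a : ℕ, m + 2 / 3 * (m * (κ - 1)) ≤ t - a ∧ t - a ≤ κ * m ∧
      K * ((1 - lam ^ 2) * Ff lam m (exp (-(2 * ℓ * t)) * (lam⁻¹ ^ 2) ^ a)) ≤
        2 * (m * (log (mahlerMeasure P) - log 2) + rest lam P m) := by
  have hℓ0 : 0 < ℓ := by rw [hℓ]; exact log_pos ((one_lt_inv₀ h0).2 h1)
  have hpow : ∀ a : ℕ, (lam⁻¹ ^ 2) ^ a = exp (2 * ℓ * a) := by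
    intro a
    rw [← pow_mul, hℓ, show 2 * log lam⁻¹ * (a:ℝ) = ((2 * a : ℕ) : ℝ) * log lam⁻¹ by push_cast; ring,
      exp_nat_mul, exp_log (by positivity)]
  set b := t - m - 2 / 3 * (m * (κ - 1)) with hb
  have hbK : (K : ℝ) + 1 ≤ b := by rw [hb]; linarith
  have hK0 : (1:ℝ) ≤ K := by exact_mod_cast hK
  have hm0 : (1:ℝ) ≤ m := by exact_mod_cast hm
  set A := ⌊b⌋₊ with hA
  have hA1 : (A : ℝ) ≤ b := Nat.floor_le (by linarith)
  have hA2 : b < A + 1 := Nat.lt_floor_add_one b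
  have hKA : K ≤ A := Nat.le_floor (by linarith)
  obtain ⟨k, hk, hF⟩ := block_exists h0 h1 hP hirr hroot hpm hm hK
    (y := exp (-(2 * ℓ * t)) * (lam⁻¹ ^ 2) ^ (A - K)) (by
      rw [hpow, ← exp_add, exp_le_exp, ← hκ]
      push_cast [hKA]
      have : t - A + K ≤ κ * m := by rw [hb] at hA2; linarith
      nlinarith) (by
      rw [mul_assoc, ← pow_add, Nat.sub_add_cancel hKA, hpow, ← exp_add, exp_le_one_iff]
      have : (A:ℝ) ≤ t := by nlinarith
      nlinarith)
  refine ⟨A - K + (k + 1), ?_, ?_, ?_⟩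
  · push_cast [hKA]
    have : (k:ℝ) + 1 ≤ K := by exact_mod_cast hk
    linarith
  · push_cast [hKA]
    have : (0:ℝ) ≤ k := by positivity
    linarith
  · rw [mul_assoc (exp _), ← pow_add] at hF; exact hF

/-- block lengths -/
noncomputable def mseq (g : ℝ) (m0 : ℕ) : ℕ → ℕ
  | 0 => m0
  | i + 1 => ⌈g * mseq g m0 i⌉₊

lemma blocks_exist {lam κ ℓ δ g g' : ℝ} {m0 : ℕ} (hκ : 1 < κ) (hg1 : 1 ≤ g)
    (hg : 2 / 3 * (g * (κ - 1)) = κ) (hgg : g ≤ g')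
    (hceil : ∀ m : ℕ, m0 ≤ m → (⌈g * m⌉₊ : ℝ) ≤ g' * m)
    (Hm : ∀ m : ℕ, m0 ≤ m → ∀ t : ℝ, κ * m ≤ t → ∃ a : ℕ, m + 2 / 3 * (m * (κ - 1)) ≤ t - a ∧
      t - a ≤ κ * m ∧ Ff lam m (exp (-(2 * ℓ * t)) * (lam⁻¹ ^ 2) ^ a) ≤ δ)
    (J : ℕ) {t : ℝ} (ht : κ * (m0 * g' ^ J) ≤ t) :
    ∃ a m : ℕ → ℕ, (∀ i < J, ∀ k < J, i ≠ k →
      Disjoint (Finset.Ico (a i) (a i + m i)) (Finset.Ico (a k) (a k + m k))) ∧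
      ∀ i < J, Ff lam (m i) (exp (-(2 * ℓ * t)) * (lam⁻¹ ^ 2) ^ (a i)) ≤ δ := by
  have hstep : ∀ i, g * mseq g m0 i ≤ mseq g m0 (i + 1) := fun i => Nat.le_ceil _
  have hmono : Monotone (mseq g m0) := by
    refine monotone_nat_of_le_succ fun i => ?_
    have := hstep i
    have h2 : (mseq g m0 i : ℝ) ≤ mseq g m0 (i + 1) := by
      have : (0:ℝ) ≤ mseq g m0 i := by positivity
      nlinarith
    exact_mod_cast h2
  have hge : ∀ i, m0 ≤ mseq g m0 i := fun i => hmono (Nat.zero_le i)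
  have hle : ∀ i, (mseq g m0 i : ℝ) ≤ m0 * g' ^ i := by
    intro i
    induction i with
    | zero => simp [mseq]
    | succ i ih =>
      calc (mseq g m0 (i + 1) : ℝ) ≤ g' * mseq g m0 i := hceil _ (hge i)
        _ ≤ g' * (m0 * g' ^ i) := by gcongr; linarith
        _ = m0 * g' ^ (i + 1) := by ring
  have hex : ∀ i, ∃ a : ℕ, i < J → (mseq g m0 i + 2 / 3 * (mseq g m0 i * (κ - 1)) ≤ t - a ∧
      t - a ≤ κ * mseq g m0 i ∧ Ff lam (mseq g m0 i) (exp (-(2 * ℓ * t)) * (lam⁻¹ ^ 2) ^ a) ≤ δ) := by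
    intro i
    by_cases hi : i < J
    · obtain ⟨a, ha⟩ := Hm (mseq g m0 i) (hge i) t (by
        refine le_trans ?_ ht
        refine mul_le_mul_of_nonneg_left ((hle i).trans ?_) (by linarith)
        gcongr
        · linarith
      )
      exact ⟨a, fun _ => ha⟩
    · exact ⟨0, fun h => absurd h hi⟩
  choose a ha using hex
  refine ⟨a, mseq g m0, ?_, fun i hi => (ha i hi).2.2⟩
  have key : ∀ i < J, ∀ k < J, i < k →
      Disjoint (Finset.Ico (a k) (a k + mseq g m0 k)) (Finset.Ico (a i) (a i + mseq g m0 i)) := by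
    intro i hi k hk hik
    rw [Finset.disjoint_left]
    intro n hn1 hn2
    rw [Finset.mem_Ico] at hn1 hn2
    have b1 : (n : ℝ) < a k + mseq g m0 k := by exact_mod_cast hn1.2
    have b2 : (a i : ℝ) ≤ n := by exact_mod_cast hn2.1
    have c1 := (ha k hk).1
    have c2 := (ha i hi).2.1
    have d1 : g * mseq g m0 i ≤ mseq g m0 k :=
      (hstep i).trans (by exact_mod_cast hmono hik)
    have d2 : κ * mseq g m0 i ≤ 2 / 3 * (mseq g m0 k * (κ - 1)) := by
      rw [← hg]; nlinarith
    linarith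
  intro i hi k hk hne
  rcases lt_or_gt_of_ne hne with h | h
  · exact (key i hi k hk h).symm
  · exact key k hk i hi h

lemma consts {lam : ℝ} {P : Polynomial ℤ} (hl : 1 / 2 < lam) (h1 : lam < 1) (hP : P ≠ 0)
    (hirr : Irreducible P) (hroot : Polynomial.aeval lam P = 0)
    (hpm : ∀ Q : Polynomial ℤ, Q ≠ 0 → (∀ n, Q.coeff n = -1 ∨ Q.coeff n = 0 ∨ Q.coeff n = 1) →
      Polynomial.aeval lam Q ≠ 0)
    (hineq : (Real.log (mahlerMeasure P) - Real.log 2) * Real.log (mahlerMeasure P) ^ 2 <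
      1 / 27 * (Real.log (mahlerMeasure P) - Real.log lam⁻¹) ^ 3 * lam ^ 4) :
    ∃ (κ δ g' : ℝ) (m0 : ℕ), 1 ≤ m0 ∧ 1 < κ ∧ 0 ≤ δ ∧ 1 < g' ∧ exp 1 * δ * g' ^ 2 < 1 ∧
      ∀ (J : ℕ) (t : ℝ), κ * (m0 * g' ^ J) ≤ t →
      ∃ a m : ℕ → ℕ, (∀ i < J, ∀ k < J, i ≠ k →
      Disjoint (Finset.Ico (a i) (a i + m i)) (Finset.Ico (a k) (a k + m k))) ∧
      ∀ i < J, Ff lam (m i) (exp (-(2 * log lam⁻¹ * t)) * (lam⁻¹ ^ 2) ^ (a i)) ≤ δ := by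
  have h0 : 0 < lam := by linarith
  have hL := log_mahler_ge h0 h1 hP hirr hroot hpm
  set L := log (mahlerMeasure P) with hLd
  set ℓ := log lam⁻¹ with hℓ
  have hℓ0 : 0 < ℓ := log_pos ((one_lt_inv₀ h0).2 h1)
  have hℓ2 : ℓ < log 2 := by
    apply log_lt_log (by positivity)
    rw [inv_lt_comm₀ h0 two_pos]; linarith
  have hlL : 0 < L - ℓ := by linarith
  have hL0 : 0 < L := by linarith
  have hlam2 : 0 < 1 - lam ^ 2 := by nlinarith
  set κ := L / ℓ with hκ
  have hκℓ : κ * ℓ = L := by rw [hκ]; field_simp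
  have hκ1 : 1 < κ := by rw [hκ, lt_div_iff₀ hℓ0]; linarith
  set g := 3 / 2 * (L / (L - ℓ)) with hgd
  have hg : 2 / 3 * (g * (κ - 1)) = κ := by rw [hgd, hκ]; field_simp
  have hg1 : 1 < g := by
    have : 1 ≤ L / (L - ℓ) := by rw [le_div_iff₀ hlL]; linarith
    rw [hgd]; linarith
  set δ1 := 2 * (L - log 2) / ((1 - lam ^ 2) * ((κ - 1) / 3)) with hδ1
  have hκ1' : 0 < κ - 1 := by linarith
  have hδ10 : 0 ≤ δ1 := by
    rw [hδ1]
    have : 0 ≤ L - log 2 := by linarith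
    positivity
  have hθ : exp 1 * δ1 * g ^ 2 < 1 := by
    have e1 : δ1 * g ^ 2 = 27 / 2 * (ℓ / (1 - lam ^ 2)) * (((L - log 2) * L ^ 2) / (L - ℓ) ^ 3) := by
      rw [hδ1, hgd, hκ]; field_simp; ring
    have e2 : ((L - log 2) * L ^ 2) / (L - ℓ) ^ 3 ≤ 1 / 27 * lam ^ 4 := by
      rw [div_le_iff₀ (by positivity)]; linarith
    have e3 : ℓ / (1 - lam ^ 2) ≤ 1 / 2 * lam⁻¹ ^ 2 := by
      rw [div_le_iff₀ hlam2]
      have : 2 * ℓ ≤ lam⁻¹ ^ 2 - 1 := by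
        have := log_le_sub_one_of_pos (x := lam⁻¹ ^ 2) (by positivity)
        rw [log_pow] at this; exact_mod_cast this
      have e : 1 / 2 * lam⁻¹ ^ 2 * (1 - lam ^ 2) = 1 / 2 * (lam⁻¹ ^ 2 - 1) := by field_simp
      rw [e]; linarith
    have e4 : δ1 * g ^ 2 ≤ 1 / 4 := by
      rw [e1]
      have hnn : 0 ≤ ((L - log 2) * L ^ 2) / (L - ℓ) ^ 3 := by
        have : 0 ≤ L - log 2 := by linarith
        positivity
      calc 27 / 2 * (ℓ / (1 - lam ^ 2)) * (((L - log 2) * L ^ 2) / (L - ℓ) ^ 3)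
          ≤ 27 / 2 * (1 / 2 * lam⁻¹ ^ 2) * (1 / 27 * lam ^ 4) := by gcongr
        _ = 1 / 4 * lam ^ 2 := by field_simp; ring
        _ ≤ 1 / 4 := by nlinarith
    have : exp 1 < 2.7182818286 := exp_one_lt_d9
    rw [mul_assoc]
    have h5 : 0 ≤ δ1 * g ^ 2 := by positivity
    nlinarith
  have hx : ∃ x > 0, exp 1 * (δ1 + x) * (g + x) ^ 2 < 1 := by
    have hc : Filter.Tendsto (fun x : ℝ => exp 1 * (δ1 + x) * (g + x) ^ 2) (nhdsWithin 0 (Set.Ioi 0))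
        (nhds (exp 1 * (δ1 + 0) * (g + 0) ^ 2)) := by
      apply Filter.Tendsto.mono_left _ nhdsWithin_le_nhds
      exact Continuous.tendsto (by fun_prop) 0
    have := (hc.eventually_lt_const (by simpa using hθ)).and self_mem_nhdsWithin
    obtain ⟨x, hx1, hx2⟩ := this.exists
    exact ⟨x, hx2, hx1⟩
  obtain ⟨x, hx0, hx1⟩ := hx
  have hKlim : Filter.Tendsto (fun m : ℕ => ((⌊(κ - 1) / 3 * (m:ℝ)⌋₊ : ℝ) - 1) / m) Filter.atTop
      (nhds ((κ - 1) / 3)) := by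
    have t1 := (tendsto_nat_floor_mul_div_atTop (R := ℝ) (a := (κ - 1) / 3) (by positivity)).comp
      (tendsto_natCast_atTop_atTop (R := ℝ))
    have t2 := t1.sub (tendsto_inv_atTop_zero.comp (tendsto_natCast_atTop_atTop (R := ℝ)))
    rw [sub_zero] at t2
    refine t2.congr fun m => ?_
    simp only [Function.comp]
    ring
  have hlim : Filter.Tendsto (fun m : ℕ => 2 * ((L - log 2) + rest lam P m / m) /
      ((1 - lam ^ 2) * (((⌊(κ - 1) / 3 * (m:ℝ)⌋₊ : ℝ) - 1) / m))) Filter.atTop (nhds δ1) := by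
    have := (((rest_tendsto lam P).const_add (L - log 2)).const_mul 2).div
      (hKlim.const_mul (1 - lam ^ 2)) (by positivity)
    rw [add_zero] at this
    exact this
  have ev1 := hlim.eventually_lt_const (show δ1 < δ1 + x by linarith)
  have ev2 : ∀ᶠ m : ℕ in Filter.atTop, 2 / ((κ - 1) / 3) ≤ (m:ℝ) :=
    (tendsto_natCast_atTop_atTop (R := ℝ)).eventually_ge_atTop _
  have ev3 : ∀ᶠ m : ℕ in Filter.atTop, 1 / x ≤ (m:ℝ) :=
    (tendsto_natCast_atTop_atTop (R := ℝ)).eventually_ge_atTop _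
  obtain ⟨m0, hm0⟩ := Filter.eventually_atTop.1 ((ev1.and ev2).and (ev3.and (Filter.eventually_ge_atTop 1)))
  refine ⟨κ, δ1 + x, g + x, m0, (hm0 m0 le_rfl).2.2, hκ1, by linarith, by linarith, hx1, ?_⟩
  intro J t ht
  refine blocks_exist hκ1 hg1.le hg (by linarith) ?_ ?_ J ht
  · intro m hm
    obtain ⟨-, h3, h4⟩ := hm0 m hm
    have := Nat.ceil_lt_add_one (a := g * m) (by positivity)
    rw [div_le_iff₀ hx0] at h3
    linarith
  · intro m hm t ht
    obtain ⟨⟨h1', h2⟩, h3, h4⟩ := hm0 m hm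
    have hmp : (0:ℝ) < m := by exact_mod_cast h4
    rw [div_le_iff₀ (by positivity)] at h2
    set q := ⌊(κ - 1) / 3 * (m:ℝ)⌋₊ with hq
    have hq2 : 2 ≤ q := Nat.le_floor (by push_cast; linarith)
    have hq3 : (q:ℝ) ≤ (κ - 1) / 3 * m := Nat.floor_le (by positivity)
    obtain ⟨a, ha1, ha2, ha3⟩ := block_at h0 h1 hP hirr hroot hpm (κ := κ) hℓ hκℓ h4 (K := q - 1)
      (by omega) (by push_cast [show 1 ≤ q by omega]; linarith) ht
    refine ⟨a, ha1, ha2, ?_⟩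
    push_cast [show 1 ≤ q by omega] at ha3
    have hq1 : (0:ℝ) < q - 1 := by
      have : (2:ℝ) ≤ q := by exact_mod_cast hq2
      linarith
    set Fv := Ff lam m (exp (-(2 * ℓ * t)) * (lam⁻¹ ^ 2) ^ a) with hFv
    refine le_trans ?_ h1'.le
    rw [le_div_iff₀ (by positivity)]
    have e : Fv * ((1 - lam ^ 2) * (((q:ℝ) - 1) / m)) = ((q:ℝ) - 1) * ((1 - lam ^ 2) * Fv) / m := by
      field_simp
    rw [e, div_le_iff₀ hmp]
    refine ha3.trans (le_of_eq ?_)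
    rw [← hLd]
    field_simp
end blockchoice


section assembly
open Complex (I)

/-- derivatives of the smoothed pairing -/
noncomputable def GG (S : Finset ℤ) (f : ℤ → ℝ) (c : ℤ → ℂ) (φ : ℝ → ℂ) (k : ℕ) (y : ℝ) : ℂ :=
  ∑ n ∈ S, c n * (-(f n : ℂ) ^ 2 / 2) ^ k * Complex.exp (-(y * f n ^ 2 / 2)) * φ (f n)

lemma GG_deriv (S : Finset ℤ) (f : ℤ → ℝ) (c : ℤ → ℂ) (φ : ℝ → ℂ) (k : ℕ) (y : ℝ) :
    HasDerivAt (GG S f c φ k) (GG S f c φ (k + 1) y) y := by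
  unfold GG
  refine HasDerivAt.fun_sum fun n _ => ?_
  have h1 : HasDerivAt (fun y : ℝ => -((y : ℂ) * f n ^ 2 / 2)) (-((1 : ℂ) * f n ^ 2 / 2)) y := by
    exact (((Complex.ofRealCLM.hasDerivAt (x := y)).mul_const ((f n : ℂ) ^ 2)).div_const 2).neg
  have h2 := (h1.cexp.const_mul (c n * (-(f n : ℂ) ^ 2 / 2) ^ k)).mul_const (φ (f n))
  refine h2.congr_deriv ?_
  rw [pow_succ]; ring

lemma GG_bound {φ : ℝ → ℂ} {S : Finset ℤ} {f : ℤ → ℝ} {c : ℤ → ℂ}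
    (hb : ∀ x : ℝ, ‖∑ n ∈ S, c n * Complex.exp (I * f n * x)‖ ≤ 1) {k : ℕ} (hk : 1 ≤ k) {y D : ℝ}
    (hy : 0 < y) (hD : 0 ≤ D)
    (hM : Mult (fun ξ => ξ ^ (2 * k) * Complex.exp (-((2 * k : ℕ) * (y / (2 * k) : ℝ) * ξ ^ 2 / 2)) * φ ξ)
      (√(D / (y / (2 * k))) ^ (2 * k))) :
    ‖GG S f c φ k y‖ ≤ (k * D / y) ^ k := by
  have h := (hM.const_mul ((-1 / 2 : ℂ) ^ k)) S f c 1 hb 0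
  have hk0 : (0:ℝ) < k := by exact_mod_cast hk
  have hkc : (k:ℂ) ≠ 0 := by exact_mod_cast hk0.ne'
  have e : GG S f c φ k y = ∑ n ∈ S, c n * ((-1 / 2 : ℂ) ^ k * ((f n) ^ (2 * k) *
      Complex.exp (-((2 * k : ℕ) * (y / (2 * k) : ℝ) * (f n) ^ 2 / 2)) * φ (f n))) *
      Complex.exp (I * f n * (0 : ℝ)) := by
    unfold GG
    refine Finset.sum_congr rfl fun n _ => ?_
    rw [Complex.ofReal_zero, mul_zero, Complex.exp_zero, mul_one]
    have e1 : ((2 * k : ℕ) : ℂ) * ((y / (2 * k) : ℝ) : ℂ) = y := by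
      push_cast; field_simp
    rw [e1, show (-(f n : ℂ) ^ 2 / 2) = (-1 / 2) * (f n) ^ 2 by ring, mul_pow, pow_mul]
    ring
  rw [e]
  refine h.trans (le_of_eq ?_)
  rw [mul_one, norm_pow, pow_mul √_, sq_sqrt (by positivity), ← mul_pow]
  congr 1
  simp only [norm_div, norm_neg, norm_one, Complex.norm_ofNat]
  field_simp

lemma GG_zero_bound {φ : ℝ → ℂ} (hφ : Mult φ 1) {S : Finset ℤ} {f : ℤ → ℝ} {c : ℤ → ℂ}
    (hb : ∀ x : ℝ, ‖∑ n ∈ S, c n * Complex.exp (I * f n * x)‖ ≤ 1) {y : ℝ}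
    (hy : 0 < y) : ‖GG S f c φ 0 y‖ ≤ 1 := by
  have hc := Mult.char (ProbabilityTheory.gaussianReal 0 y.toNNReal)
  have h := (hc.mul hφ) S f c 1 hb 0
  rw [mul_one, mul_one] at h
  refine le_of_eq_of_le ?_ h
  congr 1
  unfold GG
  refine Finset.sum_congr rfl fun n _ => ?_
  have e : ∀ (ρ : Measure ℝ) (t : ℝ), ∫ x : ℝ, Complex.exp (I * t * x) ∂ρ = charFun ρ t := by
    intro ρ t; rw [charFun_apply_real]; congr 1; ext x; congr 1; ring
  beta_reduce
  rw [e, ProbabilityTheory.charFun_gaussianReal, Real.coe_toNNReal _ hy.le]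
  simp
  ring

lemma final_ac {lam : ℝ} {P : Polynomial ℤ} (hl : 1 / 2 < lam) (h1 : lam < 1) (hP : P ≠ 0)
    (hirr : Irreducible P) (hroot : Polynomial.aeval lam P = 0)
    (hpm : ∀ Q : Polynomial ℤ, Q ≠ 0 → (∀ n, Q.coeff n = -1 ∨ Q.coeff n = 0 ∨ Q.coeff n = 1) →
      Polynomial.aeval lam Q ≠ 0)
    (hineq : (Real.log (mahlerMeasure P) - Real.log 2) * Real.log (mahlerMeasure P) ^ 2 <
      1 / 27 * (Real.log (mahlerMeasure P) - Real.log lam⁻¹) ^ 3 * lam ^ 4) :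
    bernoulliConv lam ≪ volume := by
  have h0 : 0 < lam := by linarith
  have := bern_prob h0 h1
  obtain ⟨κ, δ, g, m0, hm0, hκ, hδ, hg, hθ, H⟩ := consts hl h1 hP hirr hroot hpm hineq
  set ℓ := log lam⁻¹ with hℓ
  have hℓ0 : 0 < ℓ := log_pos ((one_lt_inv₀ h0).2 h1)
  set φ : ℝ → ℂ := fun ξ => ∫ t : ℝ, Complex.exp (I * ξ * t) ∂(bernoulliConv lam) with hφd
  have hφ : Mult φ 1 := Mult.char (bernoulliConv lam)
  have hself : ∀ ξ : ℝ, φ ξ = Complex.cos ξ * φ (lam * ξ) := fun ξ => bern_self h0 h1 ξ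
  have hm0' : (1:ℝ) ≤ m0 := by exact_mod_cast hm0
  set N0 : ℝ := 2 * (κ * m0) with hN0
  have hN0p : 0 < N0 := by positivity
  have hsum := epsj_summable hδ hℓ0 hN0p hg hθ
  have main : ∀ (S : Finset ℤ) (f : ℤ → ℝ) (c : ℤ → ℂ),
      (∀ x : ℝ, ‖∑ n ∈ S, c n * Complex.exp (I * f n * x)‖ ≤ 1) → ∀ J : ℕ, 1 ≤ J →
      ‖GG S f c φ 0 (exp (-(2 * ℓ * (N0 * g ^ (2 * J))))) - GG S f c φ 0 0‖ ≤
        ∑' i, epsj δ ℓ N0 g (i + J) := by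
    intro S f c hb J hJ
    have hst := steps_bound (G := GG S f c φ) (fun k y _ => GG_deriv S f c φ k y) (by
      intro k y hy
      rcases Nat.eq_zero_or_pos k with rfl | hk
      · simpa using GG_zero_bound hφ hb hy
      · have hk0 : (0:ℝ) < k := by exact_mod_cast hk
        have := GG_bound (φ := φ) hb hk hy zero_le_one
          (Mult.pow_triv hφ (s := y / (2 * k)) (by positivity) (2 * k))
        simpa using this) hδ hℓ0.le hN0p.le hg.le (by
      intro j hj y hy hyY
      have hj0 : (1:ℝ) ≤ j := by exact_mod_cast hj
      refine GG_bound (φ := φ) hb hj hy hδ ?_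
      set s := y / (2 * (j:ℝ)) with hs
      have hs0 : 0 < s := by positivity
      have hsy : s ≤ y := div_le_self hy.le (by linarith)
      have hls : log s ≤ -(ℓ * (N0 * g ^ (2 * j))) := by
        rw [← log_exp (-(ℓ * (N0 * g ^ (2 * j))))]
        exact log_le_log hs0 (hsy.trans hyY)
      obtain ⟨a, m, hdis, hF⟩ := H (2 * j) (-log s / (2 * ℓ)) (by
        rw [le_div_iff₀ (by positivity)]
        rw [hN0] at hls
        nlinarith)
      have es : exp (-(2 * ℓ * (-log s / (2 * ℓ)))) = s := by
        rw [mul_div_cancel₀ _ (by positivity), neg_neg, exp_log hs0]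
      rw [es] at hF
      exact Mult.blocks h0 hφ hself hdis hs0 hF) hJ
    have hlim : Filter.Tendsto (fun n : ℕ => exp (-(2 * ℓ * (N0 * g ^ (2 * (J + n)))))) Filter.atTop
        (nhds 0) := by
      apply tendsto_exp_neg_atTop_nhds_zero.comp
      apply Filter.Tendsto.const_mul_atTop (by positivity)
      apply Filter.Tendsto.const_mul_atTop hN0p
      apply (tendsto_pow_atTop_atTop_of_one_lt hg).comp
      apply Filter.tendsto_atTop_mono (f := fun n => n) (fun n => by omega) Filter.tendsto_id
    have hcont := ((GG_deriv S f c φ 0 0).continuousAt.tendsto.comp hlim)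
    refine le_of_tendsto' (tendsto_const_nhds.sub hcont).norm fun n => ?_
    refine (hst n).trans ?_
    have hs2 := (summable_nat_add_iff J).2 hsum
    refine le_of_eq_of_le ?_ (hs2.sum_le_tsum (Finset.range n)
      (fun i _ => epsj_nonneg hδ hℓ0.le hN0p.le (by linarith) _))
    exact Finset.sum_congr rfl fun i _ => by rw [add_comm]
  refine ac_of_gauss fun ε hε => ?_
  obtain ⟨J, hJe, hJ⟩ := (((tendsto_sum_nat_add (epsj δ ℓ N0 g)).eventually_lt_const hε).and
    (Filter.eventually_ge_atTop 1)).exists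
  refine ⟨exp (-(2 * ℓ * (N0 * g ^ (2 * J)))), exp_pos _, fun S f c hb => ?_⟩
  refine le_trans (le_of_eq ?_) ((main S f c hb J hJ).trans hJe.le)
  unfold GG
  congr 2 <;> refine Finset.sum_congr rfl fun n _ => ?_
  · rw [pow_zero, mul_one]
  · simp [hφd]
end assembly


theorem statement0 (lam : ℝ) (hlam : lam ∈ Set.Ioo (1 / 2 : ℝ) 1)
    (P : Polynomial ℤ) (hP : P ≠ 0) (hirr : Irreducible P)
    (hroot : Polynomial.aeval lam P = 0)
    (hpm : ∀ Q : Polynomial ℤ, Q ≠ 0 → (∀ n, Q.coeff n = -1 ∨ Q.coeff n = 0 ∨ Q.coeff n = 1) →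
      Polynomial.aeval lam Q ≠ 0)
    (hineq : (Real.log (mahlerMeasure P) - Real.log 2) * Real.log (mahlerMeasure P) ^ 2 <
      1 / 27 * (Real.log (mahlerMeasure P) - Real.log lam⁻¹) ^ 3 * lam ^ 4) :
    bernoulliConv lam ≪ volume :=
  final_ac hlam.1 hlam.2 hP hirr hroot hpm hineq
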